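/- arXiv:0906.2369 — 6 statements merged into one kernel-verified Lean document; each statement's English description precedes it below -/
import Mathlib

section
/- QREL ⊆ B(saH, Rec, saH): every tree transformation computed by a finite-state relabeling is definable by a bimorphism (φ, L, ψ) with φ, ψ strictly alphabetic tree homomorphisms and L a recognizable tree language. -/
/-!
A finite-state relabeling preserves the shape of its input, so a pair of trees `(s, t)` it
relates is the same thing as one tree whose nodes carry pairs `(f, g)` of symbols of equal rank
and whose leaves carry pairs `(v, y)`. The center alphabet of the bimorphism consists of these
pairs, and `φ`, `ψ` are the two projections; being rank-preserving relabelings, they are strictly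
alphabetic (`TreeHom.relabel_strictlyAlphabetic`). The transducer read as an automaton on paired
trees (`Relabeling.pairFTA`) recognizes the center language: its accepting runs and the
runs of the transducer are the same derivations (`Relabeling.run_of_reach`,
`Relabeling.exists_reach_of_run`).
-/

set_option autoImplicit false

inductive RTree (S : Type) (V : Type) (rk : S → ℕ) : Type
  | leaf : V → RTree S V rk
  | node : (f : S) → (Fin (rk f) → RTree S V rk) → RTree S V rk

namespace RTree

variable {S V D Y β : Type} {rkS : S → ℕ} {rkD : D → ℕ}

def height : RTree S V rkS → ℕ
  | leaf _ => 0
  | node _ c => Finset.univ.sup fun i => (c i).height + 1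

def yield : RTree S V rkS → List V
  | leaf v => [v]
  | node _ c => (List.ofFn fun i => (c i).yield).flatten

def subst : RTree D (Y ⊕ β) rkD → (β → RTree D Y rkD) → RTree D Y rkD
  | leaf (Sum.inl y), _ => leaf y
  | leaf (Sum.inr b), σ => σ b
  | node f c, σ => node f fun i => (c i).subst σ

def ivars : RTree D (Y ⊕ β) rkD → Multiset β
  | leaf (Sum.inl _) => 0
  | leaf (Sum.inr b) => {b}
  | node _ c => ∑ i, (c i).ivars

def Shallow : RTree S V rkS → Prop
  | leaf _ => False
  | node _ c => ∀ i, ∃ v, c i = leaf v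

def VarShallow : RTree D (Y ⊕ β) rkD → Prop
  | leaf _ => False
  | node _ c => ∀ i, ∃ b, c i = leaf (Sum.inr b)

end RTree

/-- A tree homomorphism `φ : T_S(V) → T_D(Y)`, given by a map on leaves and a
map sending each symbol `f` of rank `k` to a tree over `D` with leaves in `Y ⊕ X_k`. -/
structure TreeHom (S V : Type) (rkS : S → ℕ) (D Y : Type) (rkD : D → ℕ) where
  leafMap : V → RTree D Y rkD
  symMap : (f : S) → RTree D (Y ⊕ Fin (rkS f)) rkD

namespace TreeHom

variable {S V D Y : Type} {rkS : S → ℕ} {rkD : D → ℕ}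

/-- Application of a tree homomorphism: `f(t₁,…,t_k)φ = φ_k(f)[t₁φ,…,t_kφ]`. -/
def apply (φ : TreeHom S V rkS D Y rkD) : RTree S V rkS → RTree D Y rkD
  | .leaf v => φ.leafMap v
  | .node f c => (φ.symMap f).subst fun i => φ.apply (c i)

/-- Linear: every variable occurs at most once in each `φ_k(f)`. -/
def Linear (φ : TreeHom S V rkS D Y rkD) : Prop := ∀ f, (φ.symMap f).ivars.Nodup

/-- Complete (nondeleting): every variable of `X_k` occurs at least once in `φ_k(f)`. -/
def Complete (φ : TreeHom S V rkS D Y rkD) : Prop :=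
  ∀ f, ∀ i : Fin (rkS f), i ∈ (φ.symMap f).ivars

/-- `φ_V(v) ∈ Y` for every leaf symbol `v`. -/
def LeafToLeaf (φ : TreeHom S V rkS D Y rkD) : Prop := ∀ v, ∃ y, φ.leafMap v = .leaf y

/-- Symbol-to-symbol: leaves go to leaves and `φ_k(f) ∈ D(X_k)`. -/
def SymbolToSymbol (φ : TreeHom S V rkS D Y rkD) : Prop :=
  φ.LeafToLeaf ∧ ∀ f, (φ.symMap f).VarShallow

/-- Quasi-alphabetic: linear, complete, leaves to leaves, and `φ_k(f) ∈ D(Y ∪ X_k)`. -/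
def QuasiAlphabetic (φ : TreeHom S V rkS D Y rkD) : Prop :=
  φ.Linear ∧ φ.Complete ∧ φ.LeafToLeaf ∧ ∀ f, (φ.symMap f).Shallow

/-- Alphabetic: linear, leaves to leaves, and `φ_k(f) ∈ X_k ∪ D(X_k)`. -/
def Alphabetic (φ : TreeHom S V rkS D Y rkD) : Prop :=
  φ.Linear ∧ φ.LeafToLeaf ∧
    ∀ f, (∃ j, φ.symMap f = .leaf (Sum.inr j)) ∨ (φ.symMap f).VarShallow

/-- Strictly alphabetic: complete, alphabetic, and symbol-to-symbol. -/
def StrictlyAlphabetic (φ : TreeHom S V rkS D Y rkD) : Prop :=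
  φ.Complete ∧ φ.Alphabetic ∧ φ.SymbolToSymbol

end TreeHom

/-- A finite-state (bottom-up/top-down) tree automaton. -/
structure FTA (S V : Type) (rk : S → ℕ) where
  Q : Type
  [finQ : Fintype Q]
  final : Set Q
  leafTrans : Q → V → Prop
  nodeTrans : (q : Q) → (f : S) → (Fin (rk f) → Q) → Prop

/-- Acceptance of a tree in a state of a finite-state tree automaton. -/
inductive FTA.Reach {S V : Type} {rk : S → ℕ} (A : FTA S V rk) : A.Q → RTree S V rk → Prop
  | leaf {q v} : A.leafTrans q v → FTA.Reach A q (RTree.leaf v)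
  | node {q f qs c} : A.nodeTrans q f qs → (∀ i, FTA.Reach A (qs i) (c i)) →
      FTA.Reach A q (RTree.node f c)

/-- A tree language is recognizable if it is accepted by a finite-state tree automaton. -/
def Recognizable {S V : Type} {rk : S → ℕ} (L : Set (RTree S V rk)) : Prop :=
  ∃ A : FTA S V rk, L = { t | ∃ q ∈ A.final, A.Reach q t }

/-- A class of tree homomorphisms (for every choice of alphabets). -/
abbrev HomClass : Type 1 :=
  ∀ (G Z : Type) (rkG : G → ℕ) (D Y : Type) (rkD : D → ℕ), TreeHom G Z rkG D Y rkD → Prop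

/-- `InBim P Q τ` states that the tree transformation `τ` is defined by a bimorphism
`(φ, L, ψ)` with `φ ∈ P`, `ψ ∈ Q` and `L` a recognizable tree language (over a finite
center alphabet). -/
def InBim {S V D Y : Type} {rkS : S → ℕ} {rkD : D → ℕ} (P Qc : HomClass)
    (τ : Set (RTree S V rkS × RTree D Y rkD)) : Prop :=
  ∃ (G Z : Type) (rkG : G → ℕ) (_ : Fintype G) (_ : Fintype Z)
    (φ : TreeHom G Z rkG S V rkS) (ψ : TreeHom G Z rkG D Y rkD) (L : Set (RTree G Z rkG)),
      P G Z rkG S V rkS φ ∧ Qc G Z rkG D Y rkD ψ ∧ Recognizable L ∧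
      τ = { p | ∃ t ∈ L, p = (φ.apply t, ψ.apply t) }

/-- The class of quasi-alphabetic tree homomorphisms. -/
def qaHC : HomClass := fun _ _ _ _ _ _ φ => φ.QuasiAlphabetic

/-- The class of alphabetic tree homomorphisms. -/
def aHC : HomClass := fun _ _ _ _ _ _ φ => φ.Alphabetic

/-- The class of strictly alphabetic tree homomorphisms. -/
def saHC : HomClass := fun _ _ _ _ _ _ φ => φ.StrictlyAlphabetic

/-- The class of linear tree homomorphisms. -/
def lHC : HomClass := fun _ _ _ _ _ _ φ => φ.Linear

/-- The class of all tree homomorphisms. -/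
def allHC : HomClass := fun _ _ _ _ _ _ _ => True

/-- A quasi-alphabetic relation: a tree transformation defined by a quasi-alphabetic
tree bimorphism. -/
def IsQARel {S V D Y : Type} {rkS : S → ℕ} {rkD : D → ℕ}
    (τ : Set (RTree S V rkS × RTree D Y rkD)) : Prop :=
  InBim qaHC qaHC τ
/-- Rank-`k` symbols of the product alphabet `[S × D]`: shallow contexts in
`S(V ∪ X_k) ∩ C^k_S(V)`. -/
def ShallowCtx (S V : Type) (rk : S → ℕ) (k : ℕ) : Type :=
  { t : RTree S (V ⊕ Fin k) rk // t.Shallow ∧ ∀ j : Fin k, t.ivars.count j = 1 }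

/-- The product ranked alphabet `[S × D]`. -/
def ProdSym (S V : Type) (rkS : S → ℕ) (D Y : Type) (rkD : D → ℕ) : Type :=
  Σ k : ℕ, ShallowCtx S V rkS k × ShallowCtx D Y rkD k

/-- The rank of a symbol of `[S × D]`. -/
def prodRk {S V : Type} {rkS : S → ℕ} {D Y : Type} {rkD : D → ℕ} :
    ProdSym S V rkS D Y rkD → ℕ := Sigma.fst

/-- The first canonical projection homomorphism `ρ¹ : T_{[S×D]}(V × Y) → T_S(V)`. -/
def rho1 (S V : Type) (rkS : S → ℕ) (D Y : Type) (rkD : D → ℕ) :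
    TreeHom (ProdSym S V rkS D Y rkD) (V × Y) prodRk S V rkS where
  leafMap p := RTree.leaf p.1
  symMap s := s.2.1.val

/-- The second canonical projection homomorphism `ρ² : T_{[S×D]}(V × Y) → T_D(Y)`. -/
def rho2 (S V : Type) (rkS : S → ℕ) (D Y : Type) (rkD : D → ℕ) :
    TreeHom (ProdSym S V rkS D Y rkD) (V × Y) prodRk D Y rkD where
  leafMap p := RTree.leaf p.2
  symMap s := s.2.2.val
/-- A finite-state relabeling: rules `q(f(x₁,…,x_k)) → g(q₁(x₁),…,q_k(x_k))`
with `f ∈ S_k`, `g ∈ D_k` (and analogous rules relabeling leaves). -/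
structure Relabeling (S V : Type) (rkS : S → ℕ) (D Y : Type) (rkD : D → ℕ) where
  Q : Type
  [finQ : Fintype Q]
  final : Set Q
  leafRule : Q → V → Y → Prop
  nodeRule : (q : Q) → (f : S) → (g : D) → rkD g = rkS f → (Fin (rkS f) → Q) → Prop

/-- Runs of a finite-state relabeling. -/
inductive Relabeling.Run {S V D Y : Type} {rkS : S → ℕ} {rkD : D → ℕ}
    (M : Relabeling S V rkS D Y rkD) : M.Q → RTree S V rkS → RTree D Y rkD → Prop
  | leaf {q v y} : M.leafRule q v y → Relabeling.Run M q (RTree.leaf v) (RTree.leaf y)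
  | node {q f g} (h : rkD g = rkS f) {qs : Fin (rkS f) → M.Q}
      {c : Fin (rkS f) → RTree S V rkS} {c' : Fin (rkD g) → RTree D Y rkD} :
      M.nodeRule q f g h qs →
      (∀ i : Fin (rkS f), Relabeling.Run M (qs i) (c i) (c' (Fin.cast h.symm i))) →
      Relabeling.Run M q (RTree.node f c) (RTree.node g c')

/-- The tree transformation computed by a finite-state relabeling. -/
def Relabeling.rel {S V D Y : Type} {rkS : S → ℕ} {rkD : D → ℕ}
    (M : Relabeling S V rkS D Y rkD) : Set (RTree S V rkS × RTree D Y rkD) :=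
  { p | ∃ q ∈ M.final, M.Run q p.1 p.2 }

/-- A rule `q(f(x₁,…,x_k)) → r` of a top-down tree transducer, together with its
look-ahead language `la`.  The right-hand side `r` is a tree over the output alphabet
whose leaves are either output leaf symbols or pairs `(q', x_i)`. -/
structure TDRule (Q S V : Type) (rkS : S → ℕ) (D Y : Type) (rkD : D → ℕ) where
  st : Q
  sym : S
  rhs : RTree D (Y ⊕ (Q × Fin (rkS sym))) rkD
  la : Set (RTree S V rkS)

/-- A rule `q(v) → r` of a top-down tree transducer for an input leaf `v`. -/
structure TDLeafRule (Q S V : Type) (rkS : S → ℕ) (D Y : Type) (rkD : D → ℕ) where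
  st : Q
  lv : V
  rhs : RTree D Y rkD
  la : Set (RTree S V rkS)

/-- A top-down tree transducer (with look-ahead): finitely many states,
a set of final states and finitely many rules (each carrying a look-ahead language;
transducers without look-ahead have all look-ahead languages equal to `Set.univ`). -/
structure TDTT (S V : Type) (rkS : S → ℕ) (D Y : Type) (rkD : D → ℕ) where
  Q : Type
  [finQ : Fintype Q]
  final : Set Q
  rules : Set (TDRule Q S V rkS D Y rkD)
  leafRules : Set (TDLeafRule Q S V rkS D Y rkD)
  rules_finite : rules.Finite
  leafRules_finite : leafRules.Finite

/-- Runs of a top-down tree transducer with look-ahead. -/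
inductive TDTT.Run {S V D Y : Type} {rkS : S → ℕ} {rkD : D → ℕ}
    (M : TDTT S V rkS D Y rkD) : M.Q → RTree S V rkS → RTree D Y rkD → Prop
  | leaf {r : TDLeafRule M.Q S V rkS D Y rkD} :
      r ∈ M.leafRules → RTree.leaf r.lv ∈ r.la →
      TDTT.Run M r.st (RTree.leaf r.lv) r.rhs
  | node {r : TDRule M.Q S V rkS D Y rkD} {c : Fin (rkS r.sym) → RTree S V rkS}
      (σ : M.Q × Fin (rkS r.sym) → RTree D Y rkD) :
      r ∈ M.rules → RTree.node r.sym c ∈ r.la →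
      (∀ p ∈ r.rhs.ivars, TDTT.Run M p.1 (c p.2) (σ p)) →
      TDTT.Run M r.st (RTree.node r.sym c) (r.rhs.subst σ)

/-- The tree transformation computed by a top-down tree transducer. -/
def TDTT.rel {S V D Y : Type} {rkS : S → ℕ} {rkD : D → ℕ}
    (M : TDTT S V rkS D Y rkD) : Set (RTree S V rkS × RTree D Y rkD) :=
  { p | ∃ q ∈ M.final, M.Run q p.1 p.2 }

/-- Linear: every variable occurs at most once in the right-hand side of each rule. -/
def TDTT.Linear {S V D Y : Type} {rkS : S → ℕ} {rkD : D → ℕ}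
    (M : TDTT S V rkS D Y rkD) : Prop :=
  ∀ r ∈ M.rules, (Multiset.map Prod.snd r.rhs.ivars).Nodup

/-- Nondeleting: every variable occurs at least once in the right-hand side of each rule. -/
def TDTT.Nondeleting {S V D Y : Type} {rkS : S → ℕ} {rkD : D → ℕ}
    (M : TDTT S V rkS D Y rkD) : Prop :=
  ∀ r ∈ M.rules, ∀ i : Fin (rkS r.sym), i ∈ Multiset.map Prod.snd r.rhs.ivars

/-- No look-ahead: all look-ahead languages are trivial. -/
def TDTT.NoLookahead {S V D Y : Type} {rkS : S → ℕ} {rkD : D → ℕ}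
    (M : TDTT S V rkS D Y rkD) : Prop :=
  (∀ r ∈ M.rules, r.la = Set.univ) ∧ (∀ r ∈ M.leafRules, r.la = Set.univ)

/-- A language of the form `L[T_S,…,T_S]` for a finite tree language `L ⊆ T_S(X)`. -/
def PatternLang {S V : Type} {rkS : S → ℕ} (la : Set (RTree S V rkS)) : Prop :=
  ∃ (n : ℕ) (P : Finset (RTree S (V ⊕ Fin n) rkS)),
    la = { t | ∃ p ∈ P, ∃ σ : Fin n → RTree S V rkS, t = RTree.subst p σ }

/-- Finite look-ahead. -/
def TDTT.FiniteLookahead {S V D Y : Type} {rkS : S → ℕ} {rkD : D → ℕ}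
    (M : TDTT S V rkS D Y rkD) : Prop :=
  (∀ r ∈ M.rules, PatternLang r.la) ∧ (∀ r ∈ M.leafRules, PatternLang r.la)

/-- Regular look-ahead. -/
def TDTT.RegularLookahead {S V D Y : Type} {rkS : S → ℕ} {rkD : D → ℕ}
    (M : TDTT S V rkS D Y rkD) : Prop :=
  (∀ r ∈ M.rules, Recognizable r.la) ∧ (∀ r ∈ M.leafRules, Recognizable r.la)
/-- A context-free tree grammar over terminal ranked alphabet `S` and leaf alphabet `V`:
ranked nonterminals `N` with a nullary start nonterminal, and finitely many productions
`A(x₁,…,x_k) → t` with `t ∈ T_{S∪N}(V ∪ X_k)`. -/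
structure CFTG (S V : Type) (rkS : S → ℕ) where
  N : Type
  rkN : N → ℕ
  [finN : Fintype N]
  start : N
  start_rank : rkN start = 0
  prods : Set ((A : N) × RTree (S ⊕ N) (V ⊕ Fin (rkN A)) (Sum.elim rkS rkN))
  prods_finite : prods.Finite

/-- Embedding of terminal trees into trees over the extended alphabet `S ∪ N`. -/
def embedCFT {S V : Type} {rkS : S → ℕ} {N : Type} {rkN : N → ℕ} :
    RTree S V rkS → RTree (S ⊕ N) V (Sum.elim rkS rkN)
  | .leaf v => .leaf v
  | .node f c => .node (Sum.inl f) fun i => embedCFT (c i)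

/-- One-step rewriting of sentential forms of a context-free tree grammar. -/
inductive CFTG.Rw {S V : Type} {rkS : S → ℕ} (G : CFTG S V rkS) :
    RTree (S ⊕ G.N) V (Sum.elim rkS G.rkN) → RTree (S ⊕ G.N) V (Sum.elim rkS G.rkN) → Prop
  | rule {A : G.N} {rhs : RTree (S ⊕ G.N) (V ⊕ Fin (G.rkN A)) (Sum.elim rkS G.rkN)}
      (h : (⟨A, rhs⟩ : (B : G.N) × RTree (S ⊕ G.N) (V ⊕ Fin (G.rkN B)) (Sum.elim rkS G.rkN)) ∈ G.prods)
      (c : Fin (G.rkN A) → RTree (S ⊕ G.N) V (Sum.elim rkS G.rkN)) :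
      CFTG.Rw G (RTree.node (Sum.inr A) c) (rhs.subst c)
  | congr {f : S ⊕ G.N} {c : Fin (Sum.elim rkS G.rkN f) → RTree (S ⊕ G.N) V (Sum.elim rkS G.rkN)}
      {i : Fin (Sum.elim rkS G.rkN f)} {t'} :
      CFTG.Rw G (c i) t' → CFTG.Rw G (RTree.node f c) (RTree.node f (Function.update c i t'))

/-- The sentential form consisting of the start nonterminal. -/
def CFTG.startTree {S V : Type} {rkS : S → ℕ} (G : CFTG S V rkS) :
    RTree (S ⊕ G.N) V (Sum.elim rkS G.rkN) :=
  RTree.node (Sum.inr G.start) (fun i => False.elim (by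
    have h : i.val < G.rkN G.start := i.isLt
    rw [G.start_rank] at h
    exact Nat.not_lt_zero _ h))

/-- A tree language is algebraic (context-free) if it is generated by a
context-free tree grammar. -/
def IsAlgebraicTreeLang {S V : Type} {rkS : S → ℕ} (L : Set (RTree S V rkS)) : Prop :=
  ∃ G : CFTG S V rkS,
    L = { t | Relation.ReflTransGen G.Rw G.startTree (embedCFT (N := G.N) (rkN := G.rkN) t) }

/-- The tree homomorphism that renames leaves by `a` and symbols by the rank-preserving map `b`,
keeping the children in order: `f` is sent to `b(f)(x₁,…,x_k)`. -/
def TreeHom.relabel {S V D Y : Type} {rkS : S → ℕ} {rkD : D → ℕ} (a : V → Y) (b : S → D)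
    (h : ∀ f, rkD (b f) = rkS f) : TreeHom S V rkS D Y rkD where
  leafMap v := .leaf (a v)
  symMap f := .node (b f) fun i => .leaf (Sum.inr (Fin.cast (h f) i))

theorem TreeHom.relabel_strictlyAlphabetic {S V D Y : Type} {rkS : S → ℕ} {rkD : D → ℕ}
    (a : V → Y) (b : S → D) (h : ∀ f, rkD (b f) = rkS f) :
    (TreeHom.relabel (V := V) a b h).StrictlyAlphabetic := by
  have hv : ∀ f, ((TreeHom.relabel (V := V) a b h).symMap f).ivars =
      (Finset.univ : Finset (Fin (rkD (b f)))).val.map (Fin.cast (h f)) := by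
    intro f
    simp only [TreeHom.relabel, RTree.ivars]
    rw [← Multiset.sum_map_singleton (Multiset.map _ _), Multiset.map_map]
    rfl
  have hleaf : (TreeHom.relabel (V := V) a b h).LeafToLeaf := fun v => ⟨a v, rfl⟩
  have hsym : ∀ f, ((TreeHom.relabel (V := V) a b h).symMap f).VarShallow :=
    fun f i => ⟨_, rfl⟩
  refine ⟨fun f i => ?_, ⟨fun f => ?_, hleaf, fun f => Or.inr (hsym f)⟩, hleaf, hsym⟩
  · rw [hv, Multiset.mem_map]
    exact ⟨Fin.cast (h f).symm i, Finset.mem_univ (Fin.cast (h f).symm i), rfl⟩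
  · rw [hv]
    exact Finset.univ.nodup.map (Fin.cast_injective (h f))

namespace Relabeling

variable {S V D Y : Type} {rkS : S → ℕ} {rkD : D → ℕ}

/-- Pairs of an input symbol and an output symbol of the same rank. -/
abbrev PairSym (rkS : S → ℕ) (rkD : D → ℕ) : Type := { p : S × D // rkD p.2 = rkS p.1 }

/-- The rank of a paired symbol, taken to be that of its input component. -/
abbrev pairRk (rkS : S → ℕ) (rkD : D → ℕ) (p : PairSym rkS rkD) : ℕ := rkS p.1.1

/-- Projection of paired trees onto input trees. -/
def pairFst (V Y : Type) (rkS : S → ℕ) (rkD : D → ℕ) :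
    TreeHom (PairSym rkS rkD) (V × Y) (pairRk rkS rkD) S V rkS :=
  .relabel Prod.fst (fun p => p.1.1) fun _ => rfl

/-- Projection of paired trees onto output trees. -/
def pairSnd (V Y : Type) (rkS : S → ℕ) (rkD : D → ℕ) :
    TreeHom (PairSym rkS rkD) (V × Y) (pairRk rkS rkD) D Y rkD :=
  .relabel Prod.snd (fun p => p.1.2) fun p => p.2

/-- The relabeling read as a tree automaton on paired trees: the rule
`q(f(x₁,…,x_k)) → g(q₁(x₁),…,q_k(x_k))` becomes a transition on the symbol `(f, g)`. -/
def pairFTA (M : Relabeling S V rkS D Y rkD) :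
    FTA (PairSym rkS rkD) (V × Y) (pairRk rkS rkD) where
  Q := M.Q
  finQ := M.finQ
  final := M.final
  leafTrans q z := M.leafRule q z.1 z.2
  nodeTrans q p qs := M.nodeRule q p.1.1 p.1.2 p.2 qs

theorem run_of_reach (M : Relabeling S V rkS D Y rkD) {q : M.pairFTA.Q}
    {t : RTree (PairSym rkS rkD) (V × Y) (pairRk rkS rkD)} (ht : M.pairFTA.Reach q t) :
    M.Run q ((pairFst V Y rkS rkD).apply t) ((pairSnd V Y rkS rkD).apply t) := by
  induction ht with
  | leaf h => exact .leaf h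
  | @node q p qs c h _ ih => exact .node p.2 h ih

theorem exists_reach_of_run (M : Relabeling S V rkS D Y rkD) {q : M.Q}
    {s : RTree S V rkS} {t : RTree D Y rkD} (hr : M.Run q s t) :
    ∃ u, M.pairFTA.Reach q u ∧
      (pairFst V Y rkS rkD).apply u = s ∧ (pairSnd V Y rkS rkD).apply u = t := by
  induction hr with
  | @leaf q v y h => exact ⟨.leaf (v, y), .leaf h, rfl, rfl⟩
  | @node q f g h qs c c' hrule _ ih =>
    choose u hu hs ht using ih
    refine ⟨.node ⟨(f, g), h⟩ u, .node hrule hu, ?_, ?_⟩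
    · exact congrArg (RTree.node f) (funext hs)
    · exact congrArg (RTree.node g) (funext fun i => ht (Fin.cast h i))

end Relabeling

/-- `QREL ⊆ B(saH, Rec, saH)`: every tree transformation computed by a
finite-state relabeling is defined by a bimorphism with two strictly alphabetic tree
homomorphisms and a recognizable center language. -/
theorem qrel_subset_saH_bimorphisms {S V D Y : Type} {rkS : S → ℕ} {rkD : D → ℕ}
    [Fintype S] [Fintype V] [Fintype D] [Fintype Y]
    (M : Relabeling S V rkS D Y rkD) :
    InBim saHC saHC M.rel := by
  classical
  refine ⟨Relabeling.PairSym rkS rkD, V × Y, Relabeling.pairRk rkS rkD, inferInstance,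
    inferInstance, Relabeling.pairFst V Y rkS rkD, Relabeling.pairSnd V Y rkS rkD,
    { t | ∃ q ∈ M.pairFTA.final, M.pairFTA.Reach q t },
    TreeHom.relabel_strictlyAlphabetic _ _ _, TreeHom.relabel_strictlyAlphabetic _ _ _,
    ⟨M.pairFTA, rfl⟩, ?_⟩
  ext ⟨s, t⟩
  constructor
  · rintro ⟨q, hq, hr⟩
    obtain ⟨u, hu, rfl, rfl⟩ := M.exists_reach_of_run hr
    exact ⟨u, ⟨q, hq, hu⟩, rfl⟩
  · rintro ⟨u, ⟨q, hq, hu⟩, h⟩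
    obtain ⟨rfl, rfl⟩ := Prod.mk.inj h
    exact ⟨q, hq, M.run_of_reach hu⟩
end

section
/- B(qaH, Rec, qaH) ⊆ l-TOP^F: every quasi-alphabetic relation can be computed by a linear top-down tree transducer with finite look-ahead. -/
/-!
Let the relation be given by `(φ, L, ψ)`, with `A` an automaton for `L`. The transducer guesses
the center tree `u` together with a run of `A` on it, so its states are those of `A`. A transition
of `A` at a center symbol `g`, from `q` to `qs`, becomes one rule: it reads the root symbol of
`φ(g)`, its look-ahead checks that the input matches the shallow pattern `φ(g)`, and its
right-hand side is `ψ(g)` with the variable `j` replaced by the state `qs j` reading the child at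
the position `pos j` of the variable `j` in `φ(g)`. Such a position exists because `φ` is complete
and `φ(g)` is shallow. It determines `j`, so linearity of `ψ` gives linearity of the transducer.

The runs from `q` are exactly the pairs `(φ u, ψ u)` with `u` accepted in state `q`. Reading `u`
off a run uses completeness of `ψ`: every subtree of `u` is inspected by the run. The input
children at the positions without a variable are fixed by the look-ahead.
-/

set_option autoImplicit false

namespace RTree

variable {D Y β γ : Type} {rkD : D → ℕ}

/-- Renaming of the variables of a tree along `e`, leaving the symbols of `Y` unchanged. -/
def rename (e : β → γ) : RTree D (Y ⊕ β) rkD → RTree D (Y ⊕ γ) rkD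
  | leaf (Sum.inl y) => leaf (Sum.inl y)
  | leaf (Sum.inr b) => leaf (Sum.inr (e b))
  | node f c => node f fun i => (c i).rename e

theorem ivars_rename (e : β → γ) (t : RTree D (Y ⊕ β) rkD) :
    (t.rename e).ivars = t.ivars.map e := by
  induction t with
  | leaf v => cases v <;> simp [rename, ivars]
  | node f c ih =>
    simp only [rename, ivars, ih]
    exact (map_sum (Multiset.mapAddMonoidHom e) _ _).symm

theorem subst_rename (e : β → γ) (σ : γ → RTree D Y rkD) (t : RTree D (Y ⊕ β) rkD) :
    (t.rename e).subst σ = t.subst fun b => σ (e b) := by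
  induction t with
  | leaf v => cases v <;> simp [rename, subst]
  | node f c ih => simp only [rename, subst, ih]

/-- In a shallow tree, every occurring variable is a child of the root. -/
theorem exists_pos {f : D} {c : Fin (rkD f) → RTree D (Y ⊕ β) rkD}
    (hs : (node f c).Shallow) {b : β} (hb : b ∈ (node f c).ivars) :
    ∃ i, c i = leaf (Sum.inr b) := by
  simp only [ivars, Multiset.mem_sum] at hb
  obtain ⟨i, -, hi⟩ := hb
  obtain ⟨v, hv⟩ := hs i
  rw [hv] at hi
  cases v with
  | inl y => simp [ivars] at hi
  | inr b' =>
    simp only [ivars, Multiset.mem_singleton] at hi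
    exact ⟨i, by rw [hv, hi]⟩

theorem Shallow.eq_node {V : Type} {t : RTree D V rkD} (h : t.Shallow) :
    ∃ f c, t = node f c := by
  cases t with
  | leaf v => exact h.elim
  | node f c => exact ⟨f, c, rfl⟩

end RTree

/-- `B(qaH, Rec, qaH) ⊆ l-TOPᶠ`: every quasi-alphabetic relation is
computed by a linear top-down tree transducer with finite look-ahead. -/
theorem isQARel_subset_linear_tdtt_finite_lookahead {S V D Y : Type}
    {rkS : S → ℕ} {rkD : D → ℕ}
    [Fintype S] [Fintype V] [Fintype D] [Fintype Y]
    (τ : Set (RTree S V rkS × RTree D Y rkD)) (h : IsQARel τ) :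
    ∃ M : TDTT S V rkS D Y rkD, M.Linear ∧ M.FiniteLookahead ∧ M.rel = τ := by
  classical
  obtain ⟨G, Z, rkG, _, _, φ, ψ, L, ⟨-, hφc, hφv, hφs⟩, ⟨hψl, hψc, -, -⟩, ⟨A, rfl⟩, rfl⟩ := h
  have := A.finQ
  choose f c hfc using fun g => (hφs g).eq_node
  have hpos : ∀ g, ∀ j : Fin (rkG g), ∃ i, c g i = .leaf (Sum.inr j) := fun g j =>
    RTree.exists_pos (hfc g ▸ hφs g) (hfc g ▸ hφc g j)
  choose pos hpos using hpos
  have pos_inj : ∀ g, Function.Injective (pos g) := by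
    intro g j j' hj
    have h1 := hpos g j
    rw [hj, hpos g j'] at h1
    simpa using h1.symm
  choose lf hlf using hφv
  -- The rule for the transition `(q, g, qs)`, and the rule for the leaf transition `(q, z)`.
  let mkRule : A.Q × (Σ g : G, Fin (rkG g) → A.Q) → TDRule A.Q S V rkS D Y rkD := fun x =>
    { st := x.1
      sym := f x.2.1
      rhs := (ψ.symMap x.2.1).rename fun j => (x.2.2 j, pos x.2.1 j)
      la := { t | ∃ ρ : Fin (rkG x.2.1) → RTree S V rkS, t = (φ.symMap x.2.1).subst ρ } }
  let mkLeaf : A.Q × Z → TDLeafRule A.Q S V rkS D Y rkD := fun x =>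
    { st := x.1, lv := lf x.2, rhs := ψ.leafMap x.2, la := {.leaf (lf x.2)} }
  let M : TDTT S V rkS D Y rkD :=
    { Q := A.Q
      final := A.final
      rules := Set.image mkRule { x | A.nodeTrans x.1 x.2.1 x.2.2 }
      leafRules := Set.image mkLeaf { x | A.leafTrans x.1 x.2 }
      rules_finite := (Set.toFinite _).image _
      leafRules_finite := (Set.toFinite _).image _ }
  have sound : ∀ (q : M.Q) (s : RTree S V rkS) (t : RTree D Y rkD), M.Run q s t →
      ∃ u, A.Reach q u ∧ φ.apply u = s ∧ ψ.apply u = t := by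
    intro q s t hrun
    induction hrun with
    | leaf hr _ =>
      obtain ⟨⟨q, z⟩, hx, rfl⟩ := hr
      exact ⟨.leaf z, .leaf hx, hlf z, rfl⟩
    | node σ hr hla _ ih =>
      obtain ⟨⟨q, g, qs⟩, hx, rfl⟩ := hr
      obtain ⟨ρ, hρ⟩ := hla
      -- Completeness of `ψ` makes the right-hand side visit every variable of `g`.
      have ih' : ∀ j : Fin (rkG g), ∃ u, A.Reach (qs j) u ∧ φ.apply u = ρ j ∧
          ψ.apply u = σ (qs j, pos g j) := by
        intro j
        obtain ⟨u, h1, h2, h3⟩ := ih (qs j, pos g j) (by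
          simp only [mkRule, RTree.ivars_rename]
          exact Multiset.mem_map_of_mem _ (hψc g j))
        refine ⟨u, h1, h2.trans ?_, h3⟩
        simp only [hfc, RTree.subst, RTree.node.injEq, heq_eq_eq, mkRule, true_and] at hρ
        rw [hρ]
        simp only [hpos, RTree.subst]
      choose u h1 h2 h3 using ih'
      refine ⟨.node g u, .node hx h1, ?_, ?_⟩
      · rw [hρ]
        simp only [TreeHom.apply, h2]
      · simp only [TreeHom.apply, h3, mkRule, RTree.subst_rename]
  have complete : ∀ (q : A.Q) (u : RTree G Z rkG), A.Reach q u →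
      M.Run q (φ.apply u) (ψ.apply u) := by
    intro q u hu
    induction hu with
    | @leaf q z hz =>
      have := TDTT.Run.leaf (M := M) (r := mkLeaf (q, z)) ⟨(q, z), hz, rfl⟩ rfl
      simpa only [TreeHom.apply, hlf] using this
    | @node q g qs u hx _ ih =>
      -- The output at position `pos g j` is `ψ (u j)`; other positions are never visited.
      obtain ⟨σ, hσ⟩ : ∃ σ : A.Q × Fin (rkS (f g)) → RTree D Y rkD,
          ∀ j, σ (qs j, pos g j) = ψ.apply (u j) := by
        have hinj : Function.Injective fun j => (qs j, pos g j) := fun j j' hj =>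
          pos_inj g (congrArg Prod.snd hj)
        exact ⟨Function.extend (fun j => (qs j, pos g j)) (fun j => ψ.apply (u j))
          (fun _ => ψ.apply (.node g u)), fun j => hinj.extend_apply _ _ j⟩
      have hin : φ.apply (.node g u) =
          .node (f g) fun i => (c g i).subst fun j => φ.apply (u j) := by
        simp only [TreeHom.apply, hfc, RTree.subst]
      have hout : ψ.apply (.node g u) = (mkRule (q, ⟨g, qs⟩)).rhs.subst σ := by
        simp only [TreeHom.apply, mkRule, RTree.subst_rename, hσ]
      rw [hin, hout]
      refine TDTT.Run.node (M := M) (r := mkRule (q, ⟨g, qs⟩)) σ ⟨_, hx, rfl⟩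
        ⟨fun j => φ.apply (u j), hin.symm⟩ ?_
      intro p hp
      simp only [mkRule, RTree.ivars_rename, Multiset.mem_map] at hp
      obtain ⟨j, -, rfl⟩ := hp
      simp only [hσ, hpos, RTree.subst]
      exact ih j
  refine ⟨M, ?_, ⟨?_, ?_⟩, ?_⟩
  · rintro _ ⟨⟨q, g, qs⟩, -, rfl⟩
    simp only [mkRule, RTree.ivars_rename, Multiset.map_map]
    exact (hψl g).map (pos_inj g)
  · rintro _ ⟨⟨q, g, qs⟩, -, rfl⟩
    exact ⟨rkG g, {φ.symMap g}, by simp [mkRule]⟩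
  · rintro _ ⟨⟨q, z⟩, -, rfl⟩
    refine ⟨0, {.leaf (Sum.inl (lf z))}, ?_⟩
    ext t
    simp [mkLeaf, RTree.subst]
  · ext ⟨s, t⟩
    constructor
    · rintro ⟨q, hq, hrun⟩
      obtain ⟨u, hu, rfl, rfl⟩ := sound q s t hrun
      exact ⟨u, ⟨q, hq, hu⟩, rfl⟩
    · rintro ⟨u, ⟨q, hq, hu⟩, he⟩
      obtain ⟨rfl, rfl⟩ := Prod.mk.inj he
      exact ⟨q, hq, complete q u hu⟩
end

section
/- B(aH, Rec, aH) ⊄ l-TOP^R: there exists an alphabetic relation (defined by a bimorphism whose two homomorphisms are alphabetic and whose center language is recognizable) that cannot be computed by any linear top-down tree transducer with regular look-ahead. -/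
/-!
On a fixed input, a top-down tree transducer has only finitely many outputs, because every
rule consumes an input symbol; on an input leaf the outputs are right-hand sides of the
finitely many leaf rules (`run_leaf_mem`). An alphabetic homomorphism may erase a unary
symbol, `f(x₁) ↦ x₁`. Taking such a homomorphism as the left component, the identity as the
right one, and all trees over one unary symbol `f` and one leaf `v` as center, the bimorphism
relates the single input `v` to every tree `fⁿ(v)`, which is an infinite set.
-/

set_option autoImplicit false

/-- Trees `fⁿ(v)` over a single unary symbol and a single leaf symbol. -/
abbrev UnaryTree : Type := RTree Unit Unit (fun _ => 1)

/-- The alphabetic homomorphism erasing the unary symbol: `f(x₁) ↦ x₁`, `v ↦ v`. -/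
def eraseHom : TreeHom Unit Unit (fun _ => 1) Unit Unit (fun _ => 1) where
  leafMap _ := .leaf ()
  symMap _ := .leaf (Sum.inr 0)

/-- The identity homomorphism on unary trees: `f(x₁) ↦ f(x₁)`, `v ↦ v`. -/
def keepHom : TreeHom Unit Unit (fun _ => 1) Unit Unit (fun _ => 1) where
  leafMap _ := .leaf ()
  symMap _ := .node () fun _ => .leaf (Sum.inr 0)

theorem eraseHom_apply (t : UnaryTree) : eraseHom.apply t = .leaf () := by
  induction t with
  | leaf v => rfl
  | node f c ih => exact ih 0

theorem keepHom_apply (t : UnaryTree) : keepHom.apply t = t := by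
  induction t with
  | leaf v => rfl
  | node f c ih =>
    change RTree.node () (fun _ => keepHom.apply (c 0)) = _
    congr 1
    funext i
    rw [ih 0, Subsingleton.elim i 0]

theorem eraseHom_alphabetic : eraseHom.Alphabetic := by
  refine ⟨fun f => ?_, fun v => ⟨(), rfl⟩, fun f => Or.inl ⟨0, rfl⟩⟩
  simp [eraseHom, RTree.ivars]

theorem keepHom_alphabetic : keepHom.Alphabetic := by
  refine ⟨fun f => ?_, fun v => ⟨(), rfl⟩, fun f => Or.inr fun i => ⟨0, rfl⟩⟩
  simp [keepHom, RTree.ivars]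

theorem recognizable_univ {S V : Type} {rk : S → ℕ} :
    Recognizable (Set.univ : Set (RTree S V rk)) := by
  refine ⟨{ Q := Unit, final := Set.univ, leafTrans := fun _ _ => True,
            nodeTrans := fun _ _ _ => True }, ?_⟩
  symm
  rw [Set.eq_univ_iff_forall]
  intro t
  refine ⟨(), trivial, ?_⟩
  induction t with
  | leaf v => exact .leaf trivial
  | node f c ih => exact .node (qs := fun _ => ()) trivial ih

/-- The tree `fⁿ(v)`. -/
def unaryPow : ℕ → UnaryTree
  | 0 => .leaf ()
  | n + 1 => .node () fun _ => unaryPow n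

theorem unaryPow_height (n : ℕ) : (unaryPow n).height = n := by
  induction n with
  | zero => rfl
  | succ n ih => simp [unaryPow, RTree.height, ih]

instance : Infinite UnaryTree :=
  Infinite.of_injective unaryPow
    (Function.LeftInverse.injective (g := RTree.height) unaryPow_height)

/-- An output produced on an input leaf is the right-hand side of a leaf rule. -/
theorem run_leaf_mem {S V D Y : Type} {rkS : S → ℕ} {rkD : D → ℕ}
    (M : TDTT S V rkS D Y rkD) {q : M.Q} {v : V} {u : RTree D Y rkD}
    (h : M.Run q (.leaf v) u) : u ∈ TDLeafRule.rhs '' M.leafRules := by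
  cases h with
  | leaf hr _ => exact ⟨_, hr, rfl⟩

/-- `B(aH, Rec, aH) ⊄ l-TOPᴿ`: there is an alphabetic relation that is
not computed by any linear top-down tree transducer with regular look-ahead. -/
theorem alphabetic_not_subset_linear_tdtt_regular_lookahead :
    ∃ (S V : Type) (rkS : S → ℕ) (D Y : Type) (rkD : D → ℕ)
      (_ : Fintype S) (_ : Fintype V) (_ : Fintype D) (_ : Fintype Y)
      (τ : Set (RTree S V rkS × RTree D Y rkD)),
      InBim aHC aHC τ ∧
      ∀ M : TDTT S V rkS D Y rkD, M.Linear → M.RegularLookahead → M.rel ≠ τ := by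
  refine ⟨Unit, Unit, fun _ => 1, Unit, Unit, fun _ => 1, inferInstance, inferInstance,
    inferInstance, inferInstance, { p | ∃ t ∈ Set.univ, p = (eraseHom.apply t, keepHom.apply t) },
    ⟨Unit, Unit, fun _ => 1, inferInstance, inferInstance, eraseHom, keepHom, Set.univ,
      eraseHom_alphabetic, keepHom_alphabetic, recognizable_univ, rfl⟩, ?_⟩
  intro M _ _ hM
  have hall : ∀ t : UnaryTree, t ∈ TDLeafRule.rhs '' M.leafRules := by
    intro t
    have ht : ((.leaf (), t) : UnaryTree × UnaryTree) ∈ M.rel := by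
      rw [hM]
      exact ⟨t, trivial, by rw [eraseHom_apply, keepHom_apply]⟩
    obtain ⟨q, _, hq⟩ := ht
    exact run_leaf_mem M hq
  exact Set.infinite_univ ((M.leafRules_finite.image _).subset fun t _ => hall t)
end

section
/- ln-TOP ⊄ B(aH, Rec, aH): there exists a tree transformation computed by a linear nondeleting top-down tree transducer that is not an alphabetic relation. In particular, the class lcH of linear complete tree homomorphisms is not contained in B(aH, Rec, aH). -/
/-!
The witness is the linear complete homomorphism sending the single input symbol `f`, of
rank 3, to `g(x₀, g(x₁, x₂))`, where the single output symbol `g` has rank 2. The same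
transformation is computed by a one-state linear nondeleting top-down transducer.

Suppose `(φ, L, ψ)` is an alphabetic bimorphism defining it, and let `A` be an automaton
for `L`. Given a center tree `t ∈ L` with `φ(t) = f(x, x, x)`, consider the node of `t` that
produces the root `f`. Three distinct subtrees below this node produce the three copies of `x`.
Since output symbols have rank 2 and `ψ` is alphabetic, `ψ` keeps at most two of these
subtrees. So some subtree `s` can be exchanged for any other one that `A` accepts in the same
state, without changing `ψ(t)` (`exists_exchange`). The defined transformation is injective
(`combApply_injective`), so all trees accepted in that state have the same `φ`-image `x`. Hence
`x` lies in a set with at most one element per state of `A`. As there are infinitely many input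
trees, some choice of `x` is not in that set: a contradiction.
-/

set_option autoImplicit false

/-! ### Exchanging subtrees in the center of an alphabetic bimorphism -/

open Function

section Swap

variable {S V D Y G Z : Type} {rkS : S → ℕ} {rkD : D → ℕ} {rkG : G → ℕ}

/-- Substitution depends only on the values at the variables that occur. -/
theorem subst_congr {β : Type} (t : RTree D (Y ⊕ β) rkD) (σ σ' : β → RTree D Y rkD)
    (h : ∀ b ∈ t.ivars, σ b = σ' b) : t.subst σ = t.subst σ' := by
  induction t with
  | leaf v =>
    rcases v with y | b
    · rfl
    · exact h b (by simp [RTree.ivars])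
  | node f c ih =>
    simp only [RTree.subst, RTree.node.injEq, heq_eq_eq, true_and]
    funext i
    refine ih i fun b hb => h b ?_
    simp only [RTree.ivars, Multiset.mem_sum]
    exact ⟨i, Finset.mem_univ i, hb⟩

theorem ivars_node_leaves {β : Type} (d : D) (b : Fin (rkD d) → β) :
    (RTree.node d (fun i => RTree.leaf (Sum.inr (b i))) : RTree D (Y ⊕ β) rkD).ivars
      = Finset.univ.val.map b := by
  simp only [RTree.ivars]
  rw [← Multiset.sum_map_singleton (Finset.univ.val.map b), Multiset.map_map]
  rfl

theorem VarShallow.exists_eq {β : Type} {t : RTree D (Y ⊕ β) rkD} (h : t.VarShallow) :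
    ∃ (d : D) (b : Fin (rkD d) → β), t = .node d fun i => .leaf (Sum.inr (b i)) := by
  cases t with
  | leaf v => exact h.elim
  | node d c =>
    choose b hb using h
    exact ⟨d, b, by rw [← funext hb]⟩

/-- If all output symbols have rank at most 2, an alphabetic homomorphism keeps at most two
of the children of a node. -/
theorem card_ivars_le (hD : ∀ d, rkD d ≤ 2) {ψ : TreeHom G Z rkG D Y rkD}
    (hψ : ψ.Alphabetic) (g : G) : (ψ.symMap g).ivars.card ≤ 2 := by
  rcases hψ.2.2 g with ⟨j, hj⟩ | h
  · rw [hj]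
    simp [RTree.ivars]
  · obtain ⟨d, b, hb⟩ := VarShallow.exists_eq h
    rw [hb, ivars_node_leaves]
    simpa using hD d

/-- If `t` produces a root symbol `f` of rank at least 3 on the input side, while output symbols
have rank at most 2, then some child `c m` of that root is produced by a subtree of `t` which may
be exchanged for any tree accepted in the same state, without any effect on the output. -/
theorem exists_exchange (hD : ∀ d, rkD d ≤ 2) {φ : TreeHom G Z rkG S V rkS}
    {ψ : TreeHom G Z rkG D Y rkD} (hφ : φ.Alphabetic) (hψ : ψ.Alphabetic)
    (A : FTA G Z rkG) {f : S} (hf : 3 ≤ rkS f) (c : Fin (rkS f) → RTree S V rkS)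
    {q : A.Q} {t : RTree G Z rkG} (ht : A.Reach q t) (hc : φ.apply t = .node f c) :
    ∃ (m : Fin (rkS f)) (q' : A.Q) (s : RTree G Z rkG), A.Reach q' s ∧ φ.apply s = c m ∧
      ∀ s', A.Reach q' s' → ∃ t', A.Reach q t' ∧
        φ.apply t' = .node f (update c m (φ.apply s')) ∧ ψ.apply t' = ψ.apply t := by
  classical
  induction ht with
  | @leaf q v hv =>
    obtain ⟨y, hy⟩ := hφ.2.1 v
    simp [TreeHom.apply, hy] at hc
  | @node q g qs ch htr hch ih =>
    rcases hφ.2.2 g with ⟨j, hj⟩ | h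
    · -- `φ` erases `g`, so the root `f` is produced inside the child `j`.
      have hcj : φ.apply (ch j) = .node f c := by
        simpa [TreeHom.apply, hj, RTree.subst] using hc
      obtain ⟨m, q', s, hs, hsm, hswap⟩ := ih j hcj
      refine ⟨m, q', s, hs, hsm, fun s' hs' => ?_⟩
      obtain ⟨t', ht', hφt', hψt'⟩ := hswap s' hs'
      refine ⟨.node g (update ch j t'), .node htr fun i => ?_, ?_, ?_⟩
      · by_cases hi : i = j
        · subst hi; simpa using ht'
        · simpa [hi] using hch i
      · simpa [TreeHom.apply, hj, RTree.subst] using hφt'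
      · simp only [TreeHom.apply]
        congr 1
        funext i
        by_cases hi : i = j
        · subst hi; simpa using hψt'
        · simp [hi]
    · -- `g` produces the root `f`; one of the three subtrees below is deleted by `ψ`.
      obtain ⟨f', b, hb⟩ := VarShallow.exists_eq h
      have hnode : φ.apply (.node g ch) = .node f' fun i => φ.apply (ch (b i)) := by
        simp [TreeHom.apply, hb, RTree.subst]
      rw [hnode] at hc
      obtain ⟨rfl, hc⟩ := RTree.node.inj hc
      obtain rfl := eq_of_heq hc
      have hinj : Injective b := by
        have hnd := hφ.1 g
        rw [hb, ivars_node_leaves] at hnd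
        intro i j hij
        exact Multiset.inj_on_of_nodup_map hnd i (Finset.mem_univ_val i) j
          (Finset.mem_univ_val j) hij
      obtain ⟨m, hm⟩ : ∃ m, b m ∉ (ψ.symMap g).ivars := by
        by_contra! hall
        have h1 : Finset.univ.image b ⊆ (ψ.symMap g).ivars.toFinset := by
          intro x hx
          obtain ⟨i, -, rfl⟩ := Finset.mem_image.1 hx
          exact Multiset.mem_toFinset.2 (hall i)
        have h2 := Finset.card_le_card h1
        rw [Finset.card_image_of_injective _ hinj, Finset.card_univ, Fintype.card_fin] at h2
        have h3 := Multiset.toFinset_card_le (ψ.symMap g).ivars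
        have h4 := card_ivars_le hD hψ g
        omega
      refine ⟨m, qs (b m), ch (b m), hch _, rfl, fun s' hs' => ?_⟩
      refine ⟨.node g (update ch (b m) s'), .node htr fun i => ?_, ?_, ?_⟩
      · by_cases hi : i = b m
        · subst hi; simpa using hs'
        · simpa [hi] using hch i
      · simp only [TreeHom.apply, hb, RTree.subst, RTree.node.injEq, heq_eq_eq, true_and]
        funext i
        by_cases hi : i = m
        · subst hi; simp
        · simp [hi, hinj.ne hi]
      · simp only [TreeHom.apply]
        refine subst_congr _ _ _ fun x hx => ?_
        have hne : x ≠ b m := fun h => hm (h ▸ hx)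
        simp [hne]

/-- If there are infinitely many input trees and an input symbol of rank at least 3, while all
output symbols have rank at most 2, then the graph of an injective total function from input
trees to output trees is not an alphabetic relation. -/
theorem not_inBim_of_injective [Infinite (RTree S V rkS)] (hD : ∀ d, rkD d ≤ 2) (f : S)
    (hf : 3 ≤ rkS f) (F : RTree S V rkS → RTree D Y rkD) (hF : Injective F) :
    ¬ InBim aHC aHC { p : RTree S V rkS × RTree D Y rkD | p.2 = F p.1 } := by
  rintro ⟨G, Z, rkG, _, _, φ, ψ, L, hφ, hψ, ⟨A, rfl⟩, hτ⟩
  have := A.finQ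
  -- The trees that are the only `φ`-image of the trees accepted in some state.
  let X : Set (RTree S V rkS) :=
    { x | ∃ q, (∃ s, A.Reach q s ∧ φ.apply s = x) ∧ ∀ s, A.Reach q s → φ.apply s = x }
  have hX : X.Finite := by
    have hmem : ∀ x : X, ∃ q, (∃ s, A.Reach q s ∧ φ.apply s = x) ∧
        ∀ s, A.Reach q s → φ.apply s = x := fun x => x.2
    choose st hst using hmem
    have hinj : Injective st := by
      intro x y hxy
      obtain ⟨s, hs, hsx⟩ := (hst x).1
      exact Subtype.ext (hsx.symm.trans ((hst y).2 s (hxy ▸ hs)))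
    exact Set.finite_coe_iff.1 (Finite.of_injective st hinj)
  obtain ⟨x, hx⟩ := hX.exists_notMem
  have hgraph : ∀ t q, q ∈ A.final → A.Reach q t → ψ.apply t = F (φ.apply t) := by
    intro t q hq ht
    have : (φ.apply t, ψ.apply t) ∈
        { p : RTree S V rkS × RTree D Y rkD | p.2 = F p.1 } := by
      rw [hτ]
      exact ⟨t, ⟨q, hq, ht⟩, rfl⟩
    exact this
  have hin : (RTree.node f (fun _ => x), F (RTree.node f fun _ => x)) ∈
      { p : RTree S V rkS × RTree D Y rkD | p.2 = F p.1 } := rfl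
  rw [hτ] at hin
  obtain ⟨t, ⟨q, hq, ht⟩, heq⟩ := hin
  have hφt : φ.apply t = .node f fun _ => x := (congrArg Prod.fst heq).symm
  obtain ⟨m, q', s, hs, hsx, hswap⟩ := exists_exchange hD hφ hψ A hf _ ht hφt
  refine hx ⟨q', ⟨s, hs, hsx⟩, fun s' hs' => ?_⟩
  obtain ⟨t', ht', hφt', hψt'⟩ := hswap s' hs'
  have himg : φ.apply t' = φ.apply t := by
    apply hF
    rw [← hgraph t' q hq ht', ← hgraph t q hq ht, hψt']
  rw [hφt', hφt] at himg
  have h := congrFun (eq_of_heq (RTree.node.inj himg).2) m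
  simpa using h

end Swap

/-! ### The homomorphism `f(x₀, x₁, x₂) ↦ g(x₀, g(x₁, x₂))` -/

/-- Input trees: one symbol of rank 3 and one leaf label. -/
abbrev TernaryTree : Type := RTree Unit Unit (fun _ => 3)

/-- Output trees: one symbol of rank 2 and one leaf label. -/
abbrev BinTree : Type := RTree Unit Unit (fun _ => 2)

/-- The right-hand side `g(b₀, g(b₁, b₂))` with variables named by `β`. -/
def combRhs {β : Type} (b : Fin 3 → β) : RTree Unit (Unit ⊕ β) (fun _ => 2) :=
  .node () ![.leaf (Sum.inr (b 0)), .node () ![.leaf (Sum.inr (b 1)), .leaf (Sum.inr (b 2))]]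

theorem ivars_combRhs {β : Type} (b : Fin 3 → β) :
    (combRhs b).ivars = Finset.univ.val.map b := by
  simp only [combRhs, RTree.ivars, Fin.sum_univ_two, Fin.univ_val_map]
  rfl

theorem combRhs_subst {β : Type} (b : Fin 3 → β) (σ : β → BinTree) :
    (combRhs b).subst σ = .node () ![σ (b 0), .node () ![σ (b 1), σ (b 2)]] := by
  simp only [combRhs, RTree.subst, RTree.node.injEq, heq_eq_eq, true_and]
  funext i
  fin_cases i
  · rfl
  · change RTree.node () _ = RTree.node () _
    congr 1
    funext j
    fin_cases j <;> rfl

/-- The homomorphism `f(x₀, x₁, x₂) ↦ g(x₀, g(x₁, x₂))`. -/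
def combHom : TreeHom Unit Unit (fun _ => 3) Unit Unit (fun _ => 2) where
  leafMap _ := .leaf ()
  symMap _ := combRhs fun i => i

theorem combHom_apply_node (c : Fin 3 → TernaryTree) :
    combHom.apply (.node () c) =
      (.node () ![combHom.apply (c 0),
        .node () ![combHom.apply (c 1), combHom.apply (c 2)]] : BinTree) := by
  exact combRhs_subst (fun i : Fin 3 => i) fun i => combHom.apply (c i)

theorem combApply_injective : Injective combHom.apply := by
  intro t
  induction t with
  | leaf v =>
    intro t' h
    cases t' with
    | leaf v' => rfl
    | node f c => rw [combHom_apply_node] at h; simp [TreeHom.apply, combHom] at h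
  | node f c ih =>
    intro t' h
    cases t' with
    | leaf v' => rw [combHom_apply_node] at h; simp [TreeHom.apply, combHom] at h
    | node f' c' =>
      rw [combHom_apply_node, combHom_apply_node] at h
      simp at h
      obtain ⟨h0, h1, h2⟩ := h
      congr 1
      funext i
      fin_cases i
      · exact ih 0 h0
      · exact ih 1 h1
      · exact ih 2 h2

instance : Infinite TernaryTree := by
  let u : ℕ → TernaryTree := fun n =>
    Nat.rec (.leaf ()) (fun _ t => .node () fun _ => t) n
  refine Infinite.of_injective u fun m => ?_
  induction m with
  | zero =>
    rintro (_ | n) h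
    · rfl
    · cases h
  | succ m ih =>
    rintro (_ | n) h
    · cases h
    · have h' := congrFun (eq_of_heq (RTree.node.inj h).2) (0 : Fin 3)
      rw [ih h']

theorem combHom_not_inBim : ¬ InBim aHC aHC
    { p : TernaryTree × BinTree | p.2 = combHom.apply p.1 } :=
  not_inBim_of_injective (fun _ => le_rfl) () le_rfl _ combApply_injective

/-! ### The transducer computing it -/

/-- The one-state top-down transducer with the rule `q(f(x₀, x₁, x₂)) → g(q(x₀), g(q(x₁), q(x₂)))`
and the identity on leaves. -/
def combTDTT : TDTT Unit Unit (fun _ => 3) Unit Unit (fun _ => 2) where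
  Q := Unit
  final := Set.univ
  rules := {⟨(), (), combRhs fun i => ((), i), Set.univ⟩}
  leafRules := {⟨(), (), .leaf (), Set.univ⟩}
  rules_finite := Set.finite_singleton _
  leafRules_finite := Set.finite_singleton _

theorem combTDTT_run (q : combTDTT.Q) (t : TernaryTree) (u : BinTree) :
    combTDTT.Run q t u ↔ u = combHom.apply t := by
  constructor
  · intro h
    induction h with
    | leaf hr _ =>
      obtain rfl := Set.mem_singleton_iff.1 hr
      rfl
    | node σ hr _ _ ih =>
      obtain rfl := Set.mem_singleton_iff.1 hr
      have hσ : ∀ i : Fin 3, σ ((), i) = _ := fun i => ih ((), i) (by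
        change _ ∈ (combRhs fun i : Fin 3 => ((), i)).ivars
        rw [ivars_combRhs]
        exact Multiset.mem_map_of_mem _ (Finset.mem_univ_val i))
      refine (combRhs_subst _ σ).trans ?_
      rw [combHom_apply_node]
      exact congrArg (fun a : Fin 3 → BinTree =>
        (.node () ![a 0, .node () ![a 1, a 2]] : BinTree)) (funext hσ)
  · rintro rfl
    induction t generalizing q with
    | leaf v => exact TDTT.Run.leaf (M := combTDTT) (r := ⟨(), (), .leaf (), Set.univ⟩) rfl trivial
    | node f c ih =>
      have h := TDTT.Run.node (M := combTDTT)
        (r := ⟨(), (), combRhs fun i => ((), i), Set.univ⟩) (c := c)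
        (fun p => combHom.apply (c p.2)) rfl trivial (fun p _ => ih p.2 p.1)
      rw [combHom_apply_node, ← combRhs_subst (fun i : Fin 3 => ((), i))
        fun p => combHom.apply (c p.2)]
      exact h

theorem combTDTT_rel : combTDTT.rel =
    { p : TernaryTree × BinTree | p.2 = combHom.apply p.1 } := by
  ext p
  constructor
  · rintro ⟨q, -, h⟩
    exact (combTDTT_run q p.1 p.2).1 h
  · intro h
    exact ⟨(), trivial, (combTDTT_run () p.1 p.2).2 h⟩

/-- `ln-TOP ⊄ B(aH, Rec, aH)`: there is a tree transformation computed
by a linear nondeleting top-down tree transducer (without look-ahead) that is not an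
alphabetic relation; in particular, some linear complete tree homomorphism (viewed as a
tree transformation) is not an alphabetic relation. -/
theorem lnTop_not_subset_alphabetic :
    (∃ (S V : Type) (rkS : S → ℕ) (D Y : Type) (rkD : D → ℕ)
      (_ : Fintype S) (_ : Fintype V) (_ : Fintype D) (_ : Fintype Y)
      (M : TDTT S V rkS D Y rkD),
      M.Linear ∧ M.Nondeleting ∧ M.NoLookahead ∧ ¬ InBim aHC aHC M.rel) ∧
    ∃ (S V : Type) (rkS : S → ℕ) (D Y : Type) (rkD : D → ℕ)
      (_ : Fintype S) (_ : Fintype V) (_ : Fintype D) (_ : Fintype Y)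
      (φ : TreeHom S V rkS D Y rkD),
      φ.Linear ∧ φ.Complete ∧
      ¬ InBim aHC aHC { p : RTree S V rkS × RTree D Y rkD | p.2 = φ.apply p.1 } := by
  refine ⟨⟨Unit, Unit, fun _ => 3, Unit, Unit, fun _ => 2, inferInstance, inferInstance,
    inferInstance, inferInstance, combTDTT, ?_, ?_, ?_, ?_⟩,
    Unit, Unit, fun _ => 3, Unit, Unit, fun _ => 2, inferInstance, inferInstance,
    inferInstance, inferInstance, combHom, ?_, ?_, combHom_not_inBim⟩
  · rintro r hr
    obtain rfl := Set.mem_singleton_iff.1 hr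
    change (Multiset.map Prod.snd (combRhs fun i : Fin 3 => ((), i)).ivars).Nodup
    rw [ivars_combRhs, Multiset.map_map]
    exact Multiset.Nodup.map (fun _ _ h => h) Finset.univ.nodup
  · rintro r hr i
    obtain rfl := Set.mem_singleton_iff.1 hr
    change i ∈ Multiset.map Prod.snd (combRhs fun i : Fin 3 => ((), i)).ivars
    rw [ivars_combRhs, Multiset.map_map]
    exact Multiset.mem_map.2 ⟨i, Finset.mem_univ_val _, rfl⟩
  · constructor <;> rintro r hr <;> obtain rfl := Set.mem_singleton_iff.1 hr <;> rfl
  · rw [combTDTT_rel]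
    exact combHom_not_inBim
  · intro f
    change (combRhs fun i : Fin 3 => i).ivars.Nodup
    rw [ivars_combRhs]
    exact Multiset.Nodup.map (fun _ _ h => h) Finset.univ.nodup
  · intro f i
    change i ∈ (combRhs fun i : Fin 3 => i).ivars
    rw [ivars_combRhs]
    exact Multiset.mem_map.2 ⟨i, Finset.mem_univ_val _, rfl⟩
end

section
/- Quasi-alphabetic relations preserve recognizable tree languages: if τ ∈ B(qaH, Rec, qaH) and L is a recognizable tree language, then the image Lτ = {u | ∃t ∈ L : (t,u) ∈ τ} is recognizable. -/
/-!
The image of `L` under the bimorphism `(φ, M, ψ)` is `ψ(φ⁻¹(L) ∩ M)`, so it suffices that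
recognizable languages are closed under intersection (`Recognizable.inter`, product automaton),
under inverse quasi-alphabetic homomorphisms (`Recognizable.preimage`) and under quasi-alphabetic
homomorphisms (`Recognizable.image`).

The last two rest on a normal form (`exists_shape`): if `φ` is quasi-alphabetic, each `φ_k(f)` is a
symbol applied to leaves `w i ∈ Y ∪ X_k`, and linearity and completeness say that each variable
`b` occurs at exactly one position `pos b`. For the preimage, an automaton for `L` is run on
`φ_k(f)` with the states of the subtrees substituted for the variables; completeness guarantees
that each subtree is visited, linearity that it is visited once. For the image, the automaton for
`ψ(L)` guesses the symbol `f` and a transition on it, and sends the state for the `j`-th subtree to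
position `pos j`. The leaves from `Y` in `φ_k(f)` are checked by additional states, one for each
`y : Y`, which is where finiteness of `Y` is used. Linearity allows the subtrees found at
the positions `pos j` to be pulled back independently of each other.
-/

set_option autoImplicit false

/-! ### Closure properties of recognizable tree languages -/

namespace FTA

variable {S V : Type} {rk : S → ℕ} (A : FTA S V rk)

theorem reach_leaf_iff (q : A.Q) (v : V) : A.Reach q (.leaf v) ↔ A.leafTrans q v := by
  refine ⟨fun h => ?_, Reach.leaf⟩
  cases h
  assumption

theorem reach_node_iff (q : A.Q) (f : S) (c : Fin (rk f) → RTree S V rk) :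
    A.Reach q (.node f c) ↔ ∃ qs, A.nodeTrans q f qs ∧ ∀ i, A.Reach (qs i) (c i) := by
  refine ⟨fun h => ?_, fun ⟨_, h, h'⟩ => Reach.node h h'⟩
  cases h with
  | node h h' => exact ⟨_, h, h'⟩

end FTA

/-- The tree put in place of a leaf of `T_D(Y ∪ X)` by a substitution `σ` of the variables. -/
def leafSubst {D Y β : Type} {rkD : D → ℕ} (σ : β → RTree D Y rkD) : Y ⊕ β → RTree D Y rkD
  | .inl y => .leaf y
  | .inr b => σ b

/-- Normal form of a shallow tree containing each variable exactly once: a symbol applied to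
leaves `w i`, where the variable `b` sits at position `pos b` and nowhere else. -/
theorem exists_shape {D Y β : Type} {rkD : D → ℕ} (t : RTree D (Y ⊕ β) rkD)
    (hs : t.Shallow) (hl : t.ivars.Nodup) (hc : ∀ b, b ∈ t.ivars) :
    ∃ (f : D) (w : Fin (rkD f) → Y ⊕ β) (pos : β → Fin (rkD f)),
      (∀ σ, t.subst σ = .node f fun i => leafSubst σ (w i)) ∧
      (∀ b, w (pos b) = .inr b) ∧ ∀ i b, w i = .inr b → i = pos b := by
  cases t with
  | leaf v => exact hs.elim
  | node f c =>
    choose w hw using hs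
    obtain rfl : c = fun i => .leaf (w i) := funext hw
    simp only [RTree.ivars] at hl hc
    have hmem : ∀ b, ∃ i, w i = .inr b := by
      intro b
      obtain ⟨i, -, hi⟩ := Multiset.mem_sum.1 (hc b)
      refine ⟨i, ?_⟩
      cases h : w i with
      | inl y => simp [h, RTree.ivars] at hi
      | inr b' => simp [h, RTree.ivars] at hi; rw [hi]
    choose pos hpos using hmem
    refine ⟨f, w, pos, fun σ => ?_, hpos, fun i b hi => ?_⟩
    · simp only [RTree.subst]
      congr 1
      funext i
      cases h : w i <;> simp [RTree.subst, leafSubst]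
    · by_contra hne
      -- Two distinct positions holding `b` contribute `{b} + {b}` to the multiset of variables.
      have hle : ∑ j ∈ {i, pos b}, (RTree.leaf (rk := rkD) (w j)).ivars ≤
          ∑ j, (RTree.leaf (rk := rkD) (w j)).ivars :=
        Finset.sum_le_sum_of_subset (Finset.subset_univ _)
      rw [Finset.sum_pair hne, hi, hpos b] at hle
      have := Multiset.nodup_of_le hle hl
      simp [RTree.ivars] at this

namespace Recognizable

variable {G Z S V D Y : Type} {rkG : G → ℕ} {rkS : S → ℕ} {rkD : D → ℕ}

theorem inter {L M : Set (RTree S V rkS)} (hL : Recognizable L) (hM : Recognizable M) :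
    Recognizable (L ∩ M) := by
  obtain ⟨A, rfl⟩ := hL
  obtain ⟨B, rfl⟩ := hM
  have := A.finQ
  have := B.finQ
  let C : FTA S V rkS :=
    { Q := A.Q × B.Q
      final := A.final ×ˢ B.final
      leafTrans := fun q v => A.leafTrans q.1 v ∧ B.leafTrans q.2 v
      nodeTrans := fun q f qs =>
        A.nodeTrans q.1 f (fun i => (qs i).1) ∧ B.nodeTrans q.2 f (fun i => (qs i).2) }
  have key : ∀ t (q : A.Q × B.Q), C.Reach q t ↔ A.Reach q.1 t ∧ B.Reach q.2 t := by
    intro t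
    induction t with
    | leaf v => intro q; simp only [FTA.reach_leaf_iff]; rfl
    | node f c ih =>
      intro q
      simp only [FTA.reach_node_iff]
      constructor
      · rintro ⟨qs, ⟨h1, h2⟩, h⟩
        exact ⟨⟨_, h1, fun i => ((ih i (qs i)).1 (h i)).1⟩,
          ⟨_, h2, fun i => ((ih i (qs i)).1 (h i)).2⟩⟩
      · rintro ⟨⟨as, h1, h1'⟩, ⟨bs, h2, h2'⟩⟩
        exact ⟨fun i => (as i, bs i), ⟨h1, h2⟩, fun i => (ih i _).2 ⟨h1' i, h2' i⟩⟩
  refine ⟨C, Set.ext fun t => ⟨?_, ?_⟩⟩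
  · rintro ⟨⟨a, ha, ha'⟩, ⟨b, hb, hb'⟩⟩
    exact ⟨(a, b), ⟨ha, hb⟩, (key t (a, b)).2 ⟨ha', hb'⟩⟩
  · rintro ⟨q, ⟨ha, hb⟩, h⟩
    have h := (key t q).1 h
    exact ⟨⟨q.1, ha, h.1⟩, ⟨q.2, hb, h.2⟩⟩

theorem preimage {φ : TreeHom G Z rkG S V rkS} (hφ : φ.QuasiAlphabetic)
    {L : Set (RTree S V rkS)} (hL : Recognizable L) : Recognizable {t | φ.apply t ∈ L} := by
  obtain ⟨A, rfl⟩ := hL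
  have := A.finQ
  obtain ⟨hlin, hcomp, -, hsh⟩ := hφ
  choose sym w pos hsub hpos huniq using
    fun g => exists_shape (φ.symMap g) (hsh g) (hlin g) (hcomp g)
  let C : FTA G Z rkG :=
    { Q := A.Q
      final := A.final
      leafTrans := fun q z => A.Reach q (φ.leafMap z)
      nodeTrans := fun q g ps => ∃ qs, A.nodeTrans q (sym g) qs ∧
        (∀ i v, w g i = .inl v → A.leafTrans (qs i) v) ∧
        ∀ j, qs (pos g j) = ps j }
  have key : ∀ t q, C.Reach q t ↔ A.Reach q (φ.apply t) := by
    intro t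
    induction t with
    | leaf z => intro q; simp only [FTA.reach_leaf_iff]; rfl
    | node g c ih =>
      intro q
      simp only [TreeHom.apply, hsub, FTA.reach_node_iff]
      constructor
      · rintro ⟨ps, ⟨qs, hq, hv, hp⟩, h⟩
        refine ⟨qs, hq, fun i => ?_⟩
        cases hw : w g i with
        | inl v => exact FTA.Reach.leaf (hv i v hw)
        | inr j =>
          rw [huniq g i j hw, hp j]
          exact (ih j _).1 (h j)
      · rintro ⟨qs, hq, h⟩
        refine ⟨fun j => qs (pos g j), ⟨qs, hq, fun i v hw => ?_, fun _ => rfl⟩, fun j => ?_⟩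
        · have := h i
          rw [hw] at this
          exact (FTA.reach_leaf_iff A _ _).1 this
        · have := h (pos g j)
          rw [hpos] at this
          exact (ih j _).2 this
  refine ⟨C, Set.ext fun t => ?_⟩
  exact ⟨fun ⟨q, hq, h⟩ => ⟨q, hq, (key t q).2 h⟩, fun ⟨q, hq, h⟩ => ⟨q, hq, (key t q).1 h⟩⟩

theorem image [Fintype Y] {ψ : TreeHom G Z rkG D Y rkD} (hψ : ψ.QuasiAlphabetic)
    {L : Set (RTree G Z rkG)} (hL : Recognizable L) : Recognizable (Set.image ψ.apply L) := by
  obtain ⟨A, rfl⟩ := hL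
  have := A.finQ
  obtain ⟨hlin, hcomp, hleaf, hsh⟩ := hψ
  choose sym w pos hsub hpos huniq using
    fun g => exists_shape (ψ.symMap g) (hsh g) (hlin g) (hcomp g)
  -- The state `inr y` accepts exactly the one-node tree `y`.
  let C : FTA D Y rkD :=
    { Q := A.Q ⊕ Y
      final := Set.image Sum.inl A.final
      leafTrans := fun q y => match q with
        | .inl p => ∃ z, A.leafTrans p z ∧ ψ.leafMap z = .leaf y
        | .inr y' => y = y'
      nodeTrans := fun q d rs => match q with
        | .inl p => ∃ g ps, A.nodeTrans p g ps ∧ ∃ h : sym g = d,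
            ∀ i, rs (Fin.cast (congrArg rkD h) i) = Sum.elim .inr (fun j => .inl (ps j)) (w g i)
        | .inr _ => False }
  have sound : ∀ t p, A.Reach p t → C.Reach (.inl p) (ψ.apply t) := by
    intro t p h
    induction h with
    | @leaf q z h =>
      obtain ⟨y, hy⟩ := hleaf z
      rw [TreeHom.apply, hy]
      exact .leaf ⟨z, h, hy⟩
    | @node q g ps c h _ ih =>
      rw [TreeHom.apply, hsub]
      refine .node (qs := fun i => Sum.elim Sum.inr (fun j => Sum.inl (ps j)) (w g i))
        ⟨g, ps, h, rfl, fun i => rfl⟩ fun i => ?_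
      cases hw : w g i with
      | inl y => exact .leaf rfl
      | inr j => exact ih j
  have complete : ∀ u, (∀ p, C.Reach (.inl p) u → ∃ t, A.Reach p t ∧ ψ.apply t = u) ∧
      ∀ y, C.Reach (.inr y) u → u = .leaf y := by
    intro u
    induction u with
    | leaf y =>
      refine ⟨fun p h => ?_, fun y' h => ?_⟩
      · obtain ⟨z, hz, hy⟩ := (FTA.reach_leaf_iff C _ _).1 h
        exact ⟨.leaf z, .leaf hz, hy⟩
      · exact congrArg _ ((FTA.reach_leaf_iff C _ _).1 h)
    | node d c ih =>
      refine ⟨fun p h => ?_, fun y' h => ?_⟩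
      · obtain ⟨rs, ⟨g, ps, hg, rfl, hrs⟩, h⟩ := (FTA.reach_node_iff C _ _ _).1 h
        replace hrs : ∀ i, rs i = Sum.elim .inr (fun j => .inl (ps j)) (w g i) := hrs
        have hex : ∀ j, ∃ t, A.Reach (ps j) t ∧ ψ.apply t = c (pos g j) := by
          intro j
          have hj := h (pos g j)
          rw [hrs, hpos] at hj
          exact (ih _).1 _ hj
        choose t ht ht' using hex
        refine ⟨.node g t, .node hg ht, ?_⟩
        rw [TreeHom.apply, hsub]
        congr 1
        funext i
        cases hw : w g i with
        | inl y =>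
          have hi := h i
          rw [hrs, hw] at hi
          exact ((ih i).2 y hi).symm
        | inr j =>
          rw [huniq g i j hw]
          exact ht' j
      · obtain ⟨_, hf, _⟩ := (FTA.reach_node_iff C _ _ _).1 h
        exact hf.elim
  refine ⟨C, Set.ext fun u => ⟨?_, ?_⟩⟩
  · rintro ⟨t, ⟨q, hq, h⟩, rfl⟩
    exact ⟨.inl q, ⟨q, hq, rfl⟩, sound t q h⟩
  · rintro ⟨_, ⟨q, hq, rfl⟩, h⟩
    obtain ⟨t, ht, rfl⟩ := (complete u).1 q h
    exact ⟨t, ⟨q, hq, ht⟩, rfl⟩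

end Recognizable

/-- Quasi-alphabetic relations preserve recognizable tree languages:
if `τ` is a quasi-alphabetic relation and `L` is recognizable, then the image
`Lτ = {u | ∃ t ∈ L, (t,u) ∈ τ}` is recognizable. -/
theorem isQARel_preserves_recognizable {S V D Y : Type} {rkS : S → ℕ} {rkD : D → ℕ}
    [Fintype S] [Fintype V] [Fintype D] [Fintype Y]
    (τ : Set (RTree S V rkS × RTree D Y rkD)) (hτ : IsQARel τ)
    (L : Set (RTree S V rkS)) (hL : Recognizable L) :
    Recognizable { u : RTree D Y rkD | ∃ t ∈ L, (t, u) ∈ τ } := by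
  obtain ⟨G, Z, rkG, _, _, φ, ψ, M, hφ, hψ, hM, rfl⟩ := hτ
  have h := Recognizable.image hψ ((Recognizable.preimage hφ hL).inter hM)
  refine (congrArg Recognizable (Set.ext fun u => ?_)).mp h
  constructor
  · rintro ⟨t, ⟨ht, htM⟩, rfl⟩
    exact ⟨φ.apply t, ht, t, htM, rfl⟩
  · rintro ⟨s, hs, t, htM, hst⟩
    obtain ⟨rfl, rfl⟩ := Prod.mk.inj hst
    exact ⟨t, ⟨hs, htM⟩, rfl⟩
end

section
/- Quasi-alphabetic relations preserve algebraic (context-free) tree languages: if τ ∈ B(qaH, Rec, qaH) and L is an algebraic tree language, then the image Lτ = {u | ∃t ∈ L : (t,u) ∈ τ} is algebraic. -/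
/-!
Let `G` be a context-free tree grammar for `L`, and let `τ` be given by quasi-alphabetic
homomorphisms `φ`, `ψ` and a tree automaton `A` on the center trees. The relation `τ` acts like a
linear top-down transducer whose states are those of `A`: at a node `g(…)` of the input it guesses a
center symbol `γ` with `φ γ = g(…)`, checks that the children at which `φ γ` prescribes a leaf are
that leaf, deletes them, and outputs the head of `ψ γ` with the remaining children permuted and new
leaves inserted.

The image grammar simulates this on sentential forms. Its nonterminals are `⟨q, X, P⟩` with `q` a
state and `X` a terminal or nonterminal of `G`. Every argument of `X` is passed once for each state,
so that the state in which it is finally processed can be chosen later. Terminals of `G` become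
nonterminals so that the guesses of `γ` are made after copying, as outside-in derivations require.
Since a production may delete the children it has to check, the checks are done by annotation:
`P i` is the set of leaf symbols generated by the `i`-th argument. This set is computable along
derivations because the leaves generated by `t[c₁, …, c_k]` depend only on the leaves generated by
the `cᵢ` (`CFTG.leavesOf_eq`), whence translation commutes with substitution (`trv_subst`).

Rewriting is replaced by an outside-in big-step relation `CFTG.Gen`, equivalent by
`CFTG.rtg_iff_gen`. Then `img_complete` and `img_sound_aux` show that the translation of a form `t` in
state `q` generates exactly the trees related in state `q` to the trees generated by `t`.
-/

set_option autoImplicit false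

/-! ### Substitution -/

namespace RTree

/-- Substitution with open trees: variables are replaced by trees that may
again contain variables. -/
def sbind {D Y β β' : Type} {rkD : D → ℕ} :
    RTree D (Y ⊕ β) rkD → (β → RTree D (Y ⊕ β') rkD) → RTree D (Y ⊕ β') rkD
  | leaf (Sum.inl y), _ => leaf (Sum.inl y)
  | leaf (Sum.inr b), σ => σ b
  | node f c, σ => node f fun i => (c i).sbind σ

theorem subst_sbind {D Y β β' : Type} {rkD : D → ℕ} (t : RTree D (Y ⊕ β) rkD)
    (c : β → RTree D (Y ⊕ β') rkD) (σ : β' → RTree D Y rkD) :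
    (t.sbind c).subst σ = t.subst fun b => (c b).subst σ := by
  induction t with
  | leaf x => cases x <;> rfl
  | node f d ih => simp only [sbind, subst, ih]

/-- A ground tree viewed as a tree with variables, none of which occurs. -/
def lift {D Y : Type} (β : Type) {rkD : D → ℕ} : RTree D Y rkD → RTree D (Y ⊕ β) rkD
  | leaf y => leaf (Sum.inl y)
  | node f c => node f fun i => (c i).lift β

theorem subst_lift {D Y β : Type} {rkD : D → ℕ} (t : RTree D Y rkD) (σ : β → RTree D Y rkD) :
    (t.lift β).subst σ = t := by
  induction t with
  | leaf y => rfl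
  | node f d ih => simp only [lift, subst, ih]

end RTree

/-! ### Big-step semantics of context-free tree grammars -/

/-- `G.Gen t u`: the sentential form `t` generates the terminal tree `u` by an outside-in
derivation. -/
inductive CFTG.Gen {S V : Type} {rkS : S → ℕ} (G : CFTG S V rkS) :
    RTree (S ⊕ G.N) V (Sum.elim rkS G.rkN) → RTree S V rkS → Prop
  | leaf (v : V) : CFTG.Gen G (RTree.leaf v) (RTree.leaf v)
  | node (f : S) (c : Fin (rkS f) → RTree (S ⊕ G.N) V (Sum.elim rkS G.rkN))
      (d : Fin (rkS f) → RTree S V rkS) :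
      (∀ i, CFTG.Gen G (c i) (d i)) → CFTG.Gen G (RTree.node (Sum.inl f) c) (RTree.node f d)
  | rule (A : G.N) (rhs : RTree (S ⊕ G.N) (V ⊕ Fin (G.rkN A)) (Sum.elim rkS G.rkN))
      (c : Fin (G.rkN A) → RTree (S ⊕ G.N) V (Sum.elim rkS G.rkN)) (u : RTree S V rkS) :
      ⟨A, rhs⟩ ∈ G.prods → CFTG.Gen G (rhs.subst c) u →
      CFTG.Gen G (RTree.node (Sum.inr A) c) u

namespace CFTG

variable {S V : Type} {rkS : S → ℕ} (G : CFTG S V rkS)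

theorem Gen.node_inv {G : CFTG S V rkS} {f : S}
    {c : Fin (rkS f) → RTree (S ⊕ G.N) V (Sum.elim rkS G.rkN)} {u : RTree S V rkS}
    (h : G.Gen (RTree.node (Sum.inl f) c) u) :
    ∃ d, u = RTree.node f d ∧ ∀ i, G.Gen (c i) (d i) := by
  cases h with
  | node _ _ d h => exact ⟨d, rfl, h⟩

theorem Gen.leaf_inv {G : CFTG S V rkS} {v : V} {u : RTree S V rkS}
    (h : G.Gen (RTree.leaf v) u) : u = RTree.leaf v := by
  cases h; rfl

theorem Gen.rule_inv {G : CFTG S V rkS} {A : G.N}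
    {c : Fin (G.rkN A) → RTree (S ⊕ G.N) V (Sum.elim rkS G.rkN)} {u : RTree S V rkS}
    (h : G.Gen (RTree.node (Sum.inr A) c) u) :
    ∃ rhs, ⟨A, rhs⟩ ∈ G.prods ∧ G.Gen (rhs.subst c) u := by
  cases h with
  | rule _ rhs _ _ h1 h2 => exact ⟨rhs, h1, h2⟩

theorem Gen.congr_left {G : CFTG S V rkS} {t t' : RTree (S ⊕ G.N) V (Sum.elim rkS G.rkN)}
    {u : RTree S V rkS} (h : G.Gen t u) (e : t = t') : G.Gen t' u := e ▸ h

/-- Monotonicity of generation in the substituted trees, for a class `K` of terminal trees that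
contains, with each node, all its subtrees. -/
theorem Gen.subst_mono {β : Type} {G : CFTG S V rkS} (K : RTree S V rkS → Prop)
    (hK : ∀ f d, K (RTree.node f d) → ∀ i, K (d i))
    {σ σ' : β → RTree (S ⊕ G.N) V (Sum.elim rkS G.rkN)}
    (hσ : ∀ b u, K u → G.Gen (σ b) u → G.Gen (σ' b) u)
    (s : RTree (S ⊕ G.N) (V ⊕ β) (Sum.elim rkS G.rkN)) {u : RTree S V rkS} (hu : K u)
    (h : G.Gen (s.subst σ) u) : G.Gen (s.subst σ') u := by
  generalize hw : s.subst σ = w at h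
  induction h generalizing s with
  | leaf v =>
    rcases s with (y | b) | ⟨f, c⟩
    · cases hw; exact Gen.leaf v
    · refine hσ b _ hu ?_
      have hw' : σ b = _ := hw
      rw [hw']; exact Gen.leaf v
    · cases hw
  | node f c d hc ih =>
    rcases s with (y | b) | ⟨f', c'⟩
    · cases hw
    · refine hσ b _ hu ?_
      have hw' : σ b = _ := hw
      rw [hw']; exact Gen.node f c d hc
    · cases hw
      exact Gen.node f _ d fun i => ih i (c' i) (hK _ _ hu i) rfl
  | rule A rhs c u hp hg ih =>
    rcases s with (y | b) | ⟨f', c'⟩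
    · cases hw
    · refine hσ b _ hu ?_
      have hw' : σ b = _ := hw
      rw [hw']; exact Gen.rule A rhs c u hp hg
    · cases hw
      refine Gen.rule A rhs _ u hp ?_
      exact (ih (rhs.sbind c') hu (RTree.subst_sbind _ _ _)).congr_left
        (RTree.subst_sbind rhs c' σ')

theorem Gen.of_rw {G : CFTG S V rkS} {t t' : RTree (S ⊕ G.N) V (Sum.elim rkS G.rkN)}
    (h : G.Rw t t') : ∀ u, G.Gen t' u → G.Gen t u := by
  induction h with
  | rule hp c => exact fun u hu => Gen.rule _ _ _ _ hp hu
  | @congr f c i t' _ ih =>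
    have key : ∀ j u, G.Gen (Function.update c i t' j) u → G.Gen (c j) u := by
      intro j u hj
      by_cases hji : j = i
      · subst hji; rw [Function.update_self] at hj; exact ih u hj
      · rwa [Function.update_of_ne hji] at hj
    intro u hu
    rcases f with f | A
    · obtain ⟨d, rfl, hd⟩ := hu.node_inv
      exact Gen.node f c d fun j => key j _ (hd j)
    · obtain ⟨rhs, hp, hr⟩ := hu.rule_inv
      exact Gen.rule A rhs c u hp
        (Gen.subst_mono (fun _ => True) (fun _ _ _ _ => trivial) (fun b u _ => key b u) rhs
          trivial hr)

theorem gen_embed (u : RTree S V rkS) : G.Gen (embedCFT u) u := by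
  induction u with
  | leaf v => exact Gen.leaf v
  | node f d ih => exact Gen.node f _ d ih

theorem rtg_update {f : S ⊕ G.N}
    (c : Fin (Sum.elim rkS G.rkN f) → RTree (S ⊕ G.N) V (Sum.elim rkS G.rkN))
    (i : Fin (Sum.elim rkS G.rkN f)) {t' : RTree (S ⊕ G.N) V (Sum.elim rkS G.rkN)}
    (h : Relation.ReflTransGen G.Rw (c i) t') :
    Relation.ReflTransGen G.Rw (RTree.node f c) (RTree.node f (Function.update c i t')) := by
  induction h with
  | refl => rw [Function.update_eq_self]
  | @tail a b _ hab ih =>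
    refine ih.tail ?_
    have := Rw.congr (G := G) (f := f) (c := Function.update c i a) (i := i) (t' := b)
      (by rwa [Function.update_self])
    rwa [Function.update_idem] at this

theorem rtg_node {f : S ⊕ G.N}
    (c d : Fin (Sum.elim rkS G.rkN f) → RTree (S ⊕ G.N) V (Sum.elim rkS G.rkN))
    (h : ∀ i, Relation.ReflTransGen G.Rw (c i) (d i)) :
    Relation.ReflTransGen G.Rw (RTree.node f c) (RTree.node f d) := by
  have key : ∀ s : Finset (Fin (Sum.elim rkS G.rkN f)),
      Relation.ReflTransGen G.Rw (RTree.node f c)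
        (RTree.node f fun i => if i ∈ s then d i else c i) := by
    intro s
    induction s using Finset.induction_on with
    | empty => simpa using Relation.ReflTransGen.refl
    | insert a s ha ih =>
      refine ih.trans ?_
      have h1 := rtg_update G (f := f) (fun i => if i ∈ s then d i else c i) a (t' := d a)
        (by simpa [ha] using h a)
      convert h1 using 2
      ext1 j
      by_cases hj : j = a
      · subst hj; simp
      · simp [hj]
  simpa using key Finset.univ

/-- The big-step semantics agrees with unrestricted rewriting to terminal trees. -/
theorem rtg_iff_gen (t : RTree (S ⊕ G.N) V (Sum.elim rkS G.rkN)) (u : RTree S V rkS) :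
    Relation.ReflTransGen G.Rw t (embedCFT u) ↔ G.Gen t u := by
  constructor
  · intro h
    induction h using Relation.ReflTransGen.head_induction_on with
    | refl => exact gen_embed G u
    | head h _ ih => exact Gen.of_rw h _ ih
  · intro h
    induction h with
    | leaf v => exact .refl
    | node f c d _ ih => exact rtg_node G (f := Sum.inl f) c _ ih
    | rule A rhs c u hp _ ih => exact .head (Rw.rule hp c) ih

/-- The leaf symbols generated by a sentential form. -/
def leaves (t : RTree (S ⊕ G.N) V (Sum.elim rkS G.rkN)) : Set V :=
  {v | G.Gen t (RTree.leaf v)}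

/-- The leaf symbols generated by a form with variables, when the variable `i` stands for a
form whose set of generated leaf symbols is `P i`. -/
def leavesOf {k : ℕ} (P : Fin k → Set V)
    (t : RTree (S ⊕ G.N) (V ⊕ Fin k) (Sum.elim rkS G.rkN)) : Set V :=
  {v | ∃ c, (∀ i, G.leaves (c i) = P i) ∧ v ∈ G.leaves (t.subst c)}

/-- The set of leaf symbols generated by `t[c]` depends on `c` only through the leaf symbols
generated by the `c i`. -/
theorem leavesOf_eq {k : ℕ} (t : RTree (S ⊕ G.N) (V ⊕ Fin k) (Sum.elim rkS G.rkN))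
    (c : Fin k → RTree (S ⊕ G.N) V (Sum.elim rkS G.rkN)) :
    G.leavesOf (fun i => G.leaves (c i)) t = G.leaves (t.subst c) := by
  ext v
  constructor
  · rintro ⟨c', hc', hv⟩
    refine Gen.subst_mono (fun u => ∃ v, u = RTree.leaf v) ?_ ?_ t ⟨v, rfl⟩ hv
    · rintro f d ⟨v, hv⟩; cases hv
    · rintro b _ ⟨v, rfl⟩ h
      have : v ∈ G.leaves (c' b) := h
      rw [hc' b] at this
      exact this
  · exact fun hv => ⟨c, fun _ => rfl, hv⟩

end CFTG

/-! ### The shape of quasi-alphabetic homomorphisms -/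

/-- The data of a quasi-alphabetic homomorphism: `z ↦ lf z` on leaves, and each symbol `γ` of
the center is sent to `head γ` applied to the leaves `arg γ`, where the variable `i` occurs
exactly at the argument position `pos γ i`. -/
structure QAShape {Γ Z S V : Type} {rkG : Γ → ℕ} {rkS : S → ℕ}
    (φ : TreeHom Γ Z rkG S V rkS) where
  lf : Z → V
  lf_spec : ∀ z, φ.leafMap z = RTree.leaf (lf z)
  head : Γ → S
  arg : (γ : Γ) → Fin (rkS (head γ)) → V ⊕ Fin (rkG γ)
  spec : ∀ γ, φ.symMap γ = RTree.node (head γ) fun j => RTree.leaf (arg γ j)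
  pos : (γ : Γ) → Fin (rkG γ) → Fin (rkS (head γ))
  arg_pos : ∀ γ i, arg γ (pos γ i) = Sum.inr i
  pos_unique : ∀ γ i j, arg γ j = Sum.inr i → j = pos γ i

theorem TreeHom.QuasiAlphabetic.nonempty_shape {Γ Z S V : Type} {rkG : Γ → ℕ} {rkS : S → ℕ}
    {φ : TreeHom Γ Z rkG S V rkS} (h : φ.QuasiAlphabetic) : Nonempty (QAShape φ) := by
  classical
  obtain ⟨hlin, hcomp, hleaf, hsh⟩ := h
  choose lf hlf using hleaf
  have h1 : ∀ γ, ∃ f : S, ∃ a : Fin (rkS f) → V ⊕ Fin (rkG γ),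
      φ.symMap γ = RTree.node f fun j => RTree.leaf (a j) := by
    intro γ
    have := hsh γ
    generalize φ.symMap γ = t at this
    rcases t with x | ⟨f, c⟩
    · exact this.elim
    · choose a ha using this
      exact ⟨f, a, by rw [← funext ha]⟩
  choose head arg spec using h1
  have hiv : ∀ γ, (φ.symMap γ).ivars
      = ∑ j, (RTree.leaf (arg γ j) : RTree S (V ⊕ Fin (rkG γ)) rkS).ivars := by
    intro γ; rw [spec]; rfl
  have hmem : ∀ γ i j, i ∈ (RTree.leaf (arg γ j) : RTree S (V ⊕ Fin (rkG γ)) rkS).ivars ↔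
      arg γ j = Sum.inr i := by
    intro γ i j
    rcases arg γ j with v | b
    · simp [RTree.ivars]
    · simp [RTree.ivars, eq_comm]
  have h2 : ∀ γ i, ∃ j, arg γ j = Sum.inr i := by
    intro γ i
    have := hcomp γ i
    rw [hiv, Multiset.mem_sum] at this
    obtain ⟨j, _, hj⟩ := this
    exact ⟨j, (hmem γ i j).1 hj⟩
  choose pos hpos using h2
  refine ⟨⟨lf, hlf, head, arg, spec, pos, hpos, ?_⟩⟩
  intro γ i j hj
  by_contra hne
  have hc := Multiset.nodup_iff_count_le_one.1 (hlin γ) i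
  rw [hiv, Multiset.count_sum'] at hc
  have hsub := Finset.sum_le_sum_of_subset (Finset.subset_univ ({j, pos γ i} : Finset _))
    (f := fun j => Multiset.count i
      (RTree.leaf (arg γ j) : RTree S (V ⊕ Fin (rkG γ)) rkS).ivars)
  rw [Finset.sum_pair hne] at hsub
  have e1 := Multiset.one_le_count_iff_mem.2 ((hmem γ i j).2 hj)
  have e2 := Multiset.one_le_count_iff_mem.2 ((hmem γ i _).2 (hpos γ i))
  omega

theorem QAShape.apply_node {Γ Z S V : Type} {rkG : Γ → ℕ} {rkS : S → ℕ}
    {φ : TreeHom Γ Z rkG S V rkS} (a : QAShape φ) (γ : Γ)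
    (r : Fin (rkG γ) → RTree Γ Z rkG) :
    φ.apply (RTree.node γ r) = RTree.node (a.head γ) fun j =>
      Sum.elim RTree.leaf (fun i => φ.apply (r i)) (a.arg γ j) := by
  simp only [TreeHom.apply, a.spec, RTree.subst]
  congr 1
  funext j
  rcases a.arg γ j <;> rfl

/-! ### The image grammar -/

/-- Nonterminals of the image grammar: a start symbol, symbols `lf q v` rewriting the leaf `v`
in state `q`, and, for each terminal or nonterminal `X` of the given grammar, symbols `sym q X P`
processing a form `X(t₁, …, t_k)` in state `q`, where `P i` is the set of leaf symbols generated
by `tᵢ`. -/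
inductive ImgNT (S V N Q : Type) (rk : S ⊕ N → ℕ) : Type
  | start : ImgNT S V N Q rk
  | lf : Q → V → ImgNT S V N Q rk
  | sym : Q → (X : S ⊕ N) → (Fin (rk X) → Set V) → ImgNT S V N Q rk

theorem ImgNT.finite (S V N Q : Type) (rk : S ⊕ N → ℕ) [Finite S] [Finite V] [Finite N]
    [Finite Q] : Finite (ImgNT S V N Q rk) := by
  refine Finite.of_surjective
    (fun x : Unit ⊕ (Q × V) ⊕ (Q × (Σ X : S ⊕ N, Fin (rk X) → Set V)) =>
      match x with
      | .inl _ => ImgNT.start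
      | .inr (.inl (q, v)) => ImgNT.lf q v
      | .inr (.inr (q, ⟨X, P⟩)) => ImgNT.sym q X P) ?_
  rintro (_ | ⟨q, v⟩ | ⟨q, X, P⟩)
  · exact ⟨.inl (), rfl⟩
  · exact ⟨.inr (.inl (q, v)), rfl⟩
  · exact ⟨.inr (.inr (q, ⟨X, P⟩)), rfl⟩

/-- Every argument is passed once for every state, so `sym q X P` has rank `rk X * |Q|`. -/
def ImgNT.rank {S V N Q : Type} {rk : S ⊕ N → ℕ} [Fintype Q] : ImgNT S V N Q rk → ℕ
  | .start => 0
  | .lf _ _ => 0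
  | .sym _ X _ => rk X * Fintype.card Q

/-- Parameter positions of the image grammar encode pairs of an argument position and a
state. -/
noncomputable def pidx (k : ℕ) (Q : Type) [Fintype Q] : Fin k × Q ≃ Fin (k * Fintype.card Q) :=
  ((Equiv.refl _).prodCongr (Fintype.equivFin Q)).trans finProdFinEquiv

section Image

variable {S V D Y Γ Z : Type} {rkS : S → ℕ} {rkD : D → ℕ} {rkG : Γ → ℕ}
  (G : CFTG S V rkS) (A : FTA Γ Z rkG) [Fintype A.Q]

/-- Sentential forms of the image grammar. -/
abbrev ImgTree (rkD : D → ℕ) (W : Type) : Type :=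
  RTree (D ⊕ ImgNT S V G.N A.Q (Sum.elim rkS G.rkN)) W (Sum.elim rkD ImgNT.rank)

/-- The translation of a ground sentential form, processed in state `q`. -/
noncomputable def trg (rkD : D → ℕ) (Y : Type) :
    RTree (S ⊕ G.N) V (Sum.elim rkS G.rkN) → A.Q → ImgTree G A rkD Y
  | .leaf v, q => .node (Sum.inr (.lf q v)) Fin.elim0
  | .node X c, q => .node (Sum.inr (.sym q X fun i => G.leaves (c i)))
      fun m => trg rkD Y (c ((pidx _ A.Q).symm m).1) ((pidx _ A.Q).symm m).2

/-- The translation of a form with variables, relative to the sets of leaf symbols generated by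
the trees that the variables stand for. -/
noncomputable def trv (rkD : D → ℕ) (Y : Type) {k : ℕ} (P : Fin k → Set V) :
    RTree (S ⊕ G.N) (V ⊕ Fin k) (Sum.elim rkS G.rkN) → A.Q →
      ImgTree G A rkD (Y ⊕ Fin (k * Fintype.card A.Q))
  | .leaf (Sum.inl v), q => .node (Sum.inr (.lf q v)) Fin.elim0
  | .leaf (Sum.inr i), q => .leaf (Sum.inr (pidx k A.Q (i, q)))
  | .node X c, q => .node (Sum.inr (.sym q X fun i => G.leavesOf P (c i)))
      fun m => trv rkD Y P (c ((pidx _ A.Q).symm m).1) ((pidx _ A.Q).symm m).2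

/-- Translation commutes with substitution. This is what makes the annotations by sets of leaf
symbols consistent along derivations. -/
theorem trv_subst {k : ℕ} (c : Fin k → RTree (S ⊕ G.N) V (Sum.elim rkS G.rkN))
    (t : RTree (S ⊕ G.N) (V ⊕ Fin k) (Sum.elim rkS G.rkN)) (q : A.Q) :
    (trv G A rkD Y (fun i => G.leaves (c i)) t q).subst
      (fun m => trg G A rkD Y (c ((pidx _ A.Q).symm m).1) ((pidx _ A.Q).symm m).2)
      = trg G A rkD Y (t.subst c) q := by
  induction t generalizing q with
  | leaf x =>
    rcases x with v | i
    · simp only [trv, RTree.subst, trg]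
      congr 1
      funext i
      exact i.elim0
    · simp only [trv, RTree.subst, Equiv.symm_apply_apply]
  | node X d ih =>
    simp only [trv, RTree.subst, trg, ih]
    exact congrArg (fun P => (RTree.node (Sum.inr (ImgNT.sym q X P)) fun m =>
      trg G A rkD Y ((d ((pidx _ A.Q).symm m).1).subst c) ((pidx _ A.Q).symm m).2 :
        ImgTree G A rkD Y)) (funext fun i => G.leavesOf_eq (d i) c)

variable {φ : TreeHom Γ Z rkG S V rkS} {ψ : TreeHom Γ Z rkG D Y rkD}
  (a : QAShape φ) (b : QAShape ψ)

/-- Right-hand side of the production that applies the center symbol `γ`, with state `qs i` at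
its `i`-th argument. -/
noncomputable def symRhs (γ : Γ) (qs : Fin (rkG γ) → A.Q) :
    ImgTree G A rkD (Y ⊕ Fin (rkS (a.head γ) * Fintype.card A.Q)) :=
  .node (Sum.inl (b.head γ)) fun m =>
    .leaf (Sum.map id (fun i => pidx _ A.Q (a.pos γ i, qs i)) (b.arg γ m))

/-- Productions of the image grammar. A terminal symbol `a.head γ` may be processed through `γ`
only if the leaf symbols prescribed by `φ γ` are generated by the corresponding arguments; these
arguments are then deleted. -/
inductive ImgProd : (X : ImgNT S V G.N A.Q (Sum.elim rkS G.rkN)) →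
    ImgTree G A rkD (Y ⊕ Fin X.rank) → Prop
  | start (q : A.Q) : q ∈ A.final →
      ImgProd .start ((trg G A rkD Y G.startTree q).lift _)
  | lf (q : A.Q) (z : Z) : A.leafTrans q z →
      ImgProd (.lf q (a.lf z)) (.leaf (Sum.inl (b.lf z)))
  | term (q : A.Q) (γ : Γ) (qs : Fin (rkG γ) → A.Q) (P : Fin (rkS (a.head γ)) → Set V) :
      A.nodeTrans q γ qs → (∀ j v, a.arg γ j = Sum.inl v → v ∈ P j) →
      ImgProd (.sym q (Sum.inl (a.head γ)) P) (symRhs G A a b γ qs)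
  | nonterm (q : A.Q) (B : G.N)
      (rhs : RTree (S ⊕ G.N) (V ⊕ Fin (G.rkN B)) (Sum.elim rkS G.rkN))
      (P : Fin (G.rkN B) → Set V) : ⟨B, rhs⟩ ∈ G.prods →
      ImgProd (.sym q (Sum.inr B) P) (trv G A rkD Y P rhs q)

theorem imgProd_finite [Finite V] [Finite Γ] [Finite Z] :
    {p : (X : ImgNT S V G.N A.Q (Sum.elim rkS G.rkN)) × ImgTree G A rkD (Y ⊕ Fin X.rank) |
      ImgProd G A a b p.1 p.2}.Finite := by
  have : Finite G.prods := G.prods_finite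
  let f1 : A.Q → (X : ImgNT S V G.N A.Q (Sum.elim rkS G.rkN)) ×
      ImgTree G A rkD (Y ⊕ Fin X.rank) :=
    fun q => ⟨.start, (trg G A rkD Y G.startTree q).lift _⟩
  let f2 : A.Q × Z → (X : ImgNT S V G.N A.Q (Sum.elim rkS G.rkN)) ×
      ImgTree G A rkD (Y ⊕ Fin X.rank) :=
    fun x => ⟨.lf x.1 (a.lf x.2), .leaf (Sum.inl (b.lf x.2))⟩
  let f3 : A.Q × (Σ γ : Γ, (Fin (rkG γ) → A.Q) × (Fin (rkS (a.head γ)) → Set V)) →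
      (X : ImgNT S V G.N A.Q (Sum.elim rkS G.rkN)) × ImgTree G A rkD (Y ⊕ Fin X.rank) :=
    fun x => ⟨.sym x.1 (Sum.inl (a.head x.2.1)) x.2.2.2, symRhs G A a b x.2.1 x.2.2.1⟩
  let f4 : A.Q × (Σ p : G.prods, (Fin (G.rkN p.1.1) → Set V)) →
      (X : ImgNT S V G.N A.Q (Sum.elim rkS G.rkN)) × ImgTree G A rkD (Y ⊕ Fin X.rank) :=
    fun x => ⟨.sym x.1 (Sum.inr x.2.1.1.1) x.2.2, trv G A rkD Y x.2.2 x.2.1.1.2 x.1⟩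
  refine ((((Set.finite_range f1).union (Set.finite_range f2)).union
    (Set.finite_range f3)).union (Set.finite_range f4)).subset ?_
  rintro ⟨X, t⟩ h
  change ImgProd G A a b X t at h
  cases h with
  | start q _ => exact Or.inl (Or.inl (Or.inl ⟨q, rfl⟩))
  | lf q z _ => exact Or.inl (Or.inl (Or.inr ⟨(q, z), rfl⟩))
  | term q γ qs P _ _ => exact Or.inl (Or.inr ⟨(q, ⟨γ, qs, P⟩), rfl⟩)
  | nonterm q B rhs P h => exact Or.inr ⟨(q, ⟨⟨⟨B, rhs⟩, h⟩, P⟩), rfl⟩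

/-- The grammar generating the image of the language of `G` under the bimorphism given by `φ`,
`A` and `ψ`. -/
noncomputable abbrev imgGrammar [Fintype S] [Fintype V] [Finite Γ] [Finite Z] : CFTG D Y rkD :=
  haveI := G.finN
  haveI := ImgNT.finite S V G.N A.Q (Sum.elim rkS G.rkN)
  { N := ImgNT S V G.N A.Q (Sum.elim rkS G.rkN)
    rkN := ImgNT.rank
    finN := Fintype.ofFinite _
    start := .start
    start_rank := rfl
    prods := {p | ImgProd G A a b p.1 p.2}
    prods_finite := imgProd_finite G A a b }

/-- The bimorphism restricted to center trees reaching state `q`. -/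
def TRel (φ : TreeHom Γ Z rkG S V rkS) (ψ : TreeHom Γ Z rkG D Y rkD) (q : A.Q)
    (t : RTree S V rkS) (u : RTree D Y rkD) : Prop :=
  ∃ s, A.Reach q s ∧ φ.apply s = t ∧ ψ.apply s = u

variable [Fintype S] [Fintype V] [Finite Γ] [Finite Z]

/-- If `t` generates `s` in `G` and the bimorphism relates `s` to `u` in state `q`, then the
translation of `t` in state `q` generates `u`. -/
theorem img_complete {t : RTree (S ⊕ G.N) V (Sum.elim rkS G.rkN)} {s : RTree S V rkS}
    (h : G.Gen t s) : ∀ (q : A.Q) (u : RTree D Y rkD), TRel A φ ψ q s u →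
      (imgGrammar G A a b).Gen (trg G A rkD Y t q) u := by
  induction h with
  | leaf v =>
    rintro q u ⟨r, hr, h1, rfl⟩
    cases hr with
    | @leaf _ z hz =>
      simp only [TreeHom.apply, a.lf_spec] at h1
      cases h1
      simp only [TreeHom.apply, b.lf_spec]
      exact CFTG.Gen.rule (G := imgGrammar G A a b) (.lf q (a.lf z)) _ _ _ (ImgProd.lf q z hz)
        (CFTG.Gen.leaf _)
    | @node _ γ qs c hn hc =>
      rw [a.apply_node] at h1
      cases h1
  | node f c d hc ih =>
    rintro q u ⟨r, hr, h1, rfl⟩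
    cases hr with
    | @leaf _ z hz =>
      simp only [TreeHom.apply, a.lf_spec] at h1
      cases h1
    | @node _ γ qs r hn hr =>
      rw [a.apply_node] at h1
      cases h1
      rw [b.apply_node]
      refine CFTG.Gen.rule (G := imgGrammar G A a b) (.sym q (Sum.inl (a.head γ)) _) _ _ _
        (ImgProd.term q γ qs _ hn ?_) ?_
      · -- here `φ` prescribes the leaf `v` as `j`-th child, so the `j`-th argument generates `v`
        intro j v hj
        have := hc j
        simp only [hj] at this
        exact this
      · refine CFTG.Gen.node (G := imgGrammar G A a b) (b.head γ) _ _ fun m => ?_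
        rcases hm : b.arg γ m with y | i
        · simp only [hm]
          exact CFTG.Gen.leaf (G := imgGrammar G A a b) y
        · have := ih (a.pos γ i) (qs i) (ψ.apply (r i)) ⟨r i, hr i, by simp [a.arg_pos], rfl⟩
          simp only [hm]
          exact this.congr_left (congrArg (fun p : Fin (rkS (a.head γ)) × A.Q =>
            trg G A rkD Y (c p.1) p.2)
              ((pidx _ A.Q).symm_apply_apply (a.pos γ i, qs i)).symm)
  | rule B rhs c s hp hg ih =>
    intro q u hT
    have := ih q u hT
    rw [← trv_subst] at this
    exact CFTG.Gen.rule (G := imgGrammar G A a b) (.sym q (Sum.inr B) _) _ _ _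
      (ImgProd.nonterm q B rhs _ hp) this

/-- Everything generated by the translation of `t` in state `q` is related, in state `q`, to some
tree generated by `t`. Besides this claim about translated forms, the induction carries the same claim for the
children of a terminal node: those arise when a production for a terminal symbol of `G` is
applied. -/
theorem img_sound_aux
    {w : RTree (D ⊕ (imgGrammar G A a b).N) Y (Sum.elim rkD (imgGrammar G A a b).rkN)}
    {u : RTree D Y rkD}
    (h : (imgGrammar G A a b).Gen w u) :
    (∀ q t, w = trg G A rkD Y t q → ∃ s, G.Gen t s ∧ TRel A φ ψ q s u) ∧
    (∀ (f : D) (c : Fin (rkD f) → ImgTree G A rkD Y), w = .node (Sum.inl f) c →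
      ∃ d, u = .node f d ∧ (∀ m, (imgGrammar G A a b).Gen (c m) (d m)) ∧
        ∀ m q t, c m = trg G A rkD Y t q → ∃ s, G.Gen t s ∧ TRel A φ ψ q s (d m)) := by
  induction h with
  | leaf v =>
    refine ⟨fun q t h => ?_, fun f c h => ?_⟩
    · cases t <;> cases h
    · cases h
  | node f c d hc ih =>
    refine ⟨fun q t h => ?_, fun f' c' h => ?_⟩
    · cases t <;> cases h
    · cases h
      exact ⟨d, rfl, hc, fun m q t hm => (ih m).1 q t hm⟩
  | rule X rhs c u hp hg ih =>
    refine ⟨fun q t h => ?_, fun f' c' h => ?_⟩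
    swap
    · cases h
    change ImgProd G A a b X rhs at hp
    rcases t with v | ⟨X' | B, e⟩
    · cases h
      cases hp with
      | lf _ z hz =>
        have hu := CFTG.Gen.leaf_inv hg
        subst hu
        refine ⟨_, CFTG.Gen.leaf _, .leaf z, FTA.Reach.leaf hz, ?_, ?_⟩
        · exact a.lf_spec z
        · exact b.lf_spec z
    · simp only [trg] at h
      generalize hP : (fun i => G.leaves (e i)) = P at h
      cases h
      cases hp with
      | term _ γ qs _ hn hP' =>
        obtain ⟨d, rfl, hd1, hd2⟩ := ih.2 (b.head γ) _ rfl
        have key : ∀ i, ∃ s, G.Gen (e (a.pos γ i)) s ∧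
            TRel A φ ψ (qs i) s (d (b.pos γ i)) := by
          intro i
          refine hd2 (b.pos γ i) (qs i) (e (a.pos γ i)) ?_
          simp only [b.arg_pos, Sum.map_inr, RTree.subst]
          exact congrArg (fun p : Fin (rkS (a.head γ)) × A.Q => trg G A rkD Y (e p.1) p.2)
            ((pidx _ A.Q).symm_apply_apply (a.pos γ i, qs i))
        -- `ψ` is complete, so each `i` has a position `b.pos γ i` and a center tree `r i`
        choose s hs r hr hφ hψ using key
        refine ⟨_, ?_, .node γ r, FTA.Reach.node hn hr, a.apply_node γ r, ?_⟩
        · refine CFTG.Gen.node _ _ _ fun j => ?_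
          -- prescribed leaves come from the annotation `P`; elsewhere linearity of `φ` gives
          -- `j = a.pos γ i`
          rcases hj : a.arg γ j with v | i
          · have := hP' j v hj
            rw [← hP] at this
            exact this
          · obtain rfl := a.pos_unique γ i j hj
            simpa only [Sum.elim_inr, hφ] using hs i
        · rw [b.apply_node]
          congr 1
          funext m
          have hm1 := hd1 m
          rcases hm : b.arg γ m with y | i
          · simp only [hm] at hm1
            exact (CFTG.Gen.leaf_inv (G := imgGrammar G A a b) hm1).symm
          · obtain rfl := b.pos_unique γ i m hm
            exact hψ i
    · simp only [trg] at h
      generalize hP : (fun i => G.leaves (e i)) = P at h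
      cases h
      cases hp with
      | nonterm _ _ rhs _ hp =>
        subst hP
        obtain ⟨s, hs, hT⟩ := ih.1 q (rhs.subst e) (trv_subst G A e rhs q)
        exact ⟨s, CFTG.Gen.rule B rhs e s hp hs, hT⟩

theorem imgGrammar_start (u : RTree D Y rkD) :
    (imgGrammar G A a b).Gen (imgGrammar G A a b).startTree u ↔
      ∃ q ∈ A.final, ∃ s, G.Gen G.startTree s ∧ TRel A φ ψ q s u := by
  constructor
  · intro h
    obtain ⟨rhs, hp, hg⟩ := CFTG.Gen.rule_inv h
    change ImgProd G A a b .start rhs at hp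
    cases hp with
    | start q hq =>
      exact ⟨q, hq, (img_sound_aux G A a b hg).1 q _ (RTree.subst_lift _ _)⟩
  · rintro ⟨q, hq, s, hs, hT⟩
    exact CFTG.Gen.rule (G := imgGrammar G A a b) .start _ _ _ (ImgProd.start q hq)
      ((img_complete G A a b hs q u hT).congr_left (RTree.subst_lift _ _).symm)

end Image

/-- Quasi-alphabetic relations preserve algebraic (context-free) tree
languages: if `τ` is a quasi-alphabetic relation and `L` is algebraic, then the image
`Lτ = {u | ∃ t ∈ L, (t,u) ∈ τ}` is algebraic. -/
theorem isQARel_preserves_algebraic {S V D Y : Type} {rkS : S → ℕ} {rkD : D → ℕ}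
    [Fintype S] [Fintype V] [Fintype D] [Fintype Y]
    (τ : Set (RTree S V rkS × RTree D Y rkD)) (hτ : IsQARel τ)
    (L : Set (RTree S V rkS)) (hL : IsAlgebraicTreeLang L) :
    IsAlgebraicTreeLang { u : RTree D Y rkD | ∃ t ∈ L, (t, u) ∈ τ } := by
  obtain ⟨G, rfl⟩ := hL
  obtain ⟨Γ, Z, rkG, _, _, φ, ψ, R, hφ, hψ, ⟨A, rfl⟩, rfl⟩ := hτ
  obtain ⟨a⟩ := TreeHom.QuasiAlphabetic.nonempty_shape hφ
  obtain ⟨b⟩ := TreeHom.QuasiAlphabetic.nonempty_shape hψ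
  have := A.finQ
  refine ⟨imgGrammar G A a b, ?_⟩
  ext u
  rw [Set.mem_ofPred_eq, Set.mem_ofPred_eq, CFTG.rtg_iff_gen, imgGrammar_start]
  constructor
  · rintro ⟨t, ht, s, ⟨q, hq, hs⟩, he⟩
    obtain ⟨rfl, rfl⟩ := Prod.mk.inj he
    exact ⟨q, hq, φ.apply s, (CFTG.rtg_iff_gen G _ _).1 ht, s, hs, rfl, rfl⟩
  · rintro ⟨q, hq, t, ht, s, hs, rfl, rfl⟩
    exact ⟨φ.apply s, (CFTG.rtg_iff_gen G _ _).2 ht, s, ⟨q, hq, hs⟩, rfl⟩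
end
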